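/- arXiv:1601.03489 — 8 statements merged into one kernel-verified Lean document; each statement's English description precedes it below -/
import Mathlib

section
/- Let Q be an irreducible conservative q-matrix on F with the given block structure, and let n ≥ 1. Then every closed communicating class of the LC-block-augmented truncation ₙQ is contained in F_n and has nonempty intersection with the level L_n; consequently ₙQ has at least one closed communicating class, and the number of closed communicating classes of ₙQ is at most S₁ + 1. -/
/-!
A path of positive rates of `Q` towards level `n` can be followed in the truncation `ₙQ` until it
reaches that level: rates into `F_n` or within a level do not decrease, and a jump to any other
state `(m, j)` is redirected to `(n, j)`. So every state reaches level `n` under `ₙQ`. On the other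
hand `ₙQ` never leaves `F_n`. A closed communicating class contains whatever is reachable from it,
so it meets level `n`, and hence lies in `F_n`. A class is determined by any of its elements, so
there are at most as many closed classes as states in level `n`. Finally, from a state of `F_n` only
finitely many states are reachable, and among these one with minimal reachable set generates a
closed class.
-/

/-- The block-structured state space `F = ⋃_{k≥0} L_k`, where
`L_0 = {0} × {0,…,S₀}` and `L_k = {k} × {0,…,S₁}` for `k ≥ 1`. -/
abbrev BState (S0 S1 : ℕ) : Type := {p : ℕ × ℕ // p.2 ≤ if p.1 = 0 then S0 else S1}

/-- A (stable) q-matrix: nonnegative off-diagonal entries, and for each row the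
off-diagonal entries are summable with sum at most `-q x x` (finite diagonal). -/
def IsQMatrix {α : Type*} (q : α → α → ℝ) : Prop :=
  (∀ x y : α, x ≠ y → 0 ≤ q x y) ∧
    ∀ x : α, Summable (fun y : {z : α // z ≠ x} => q x (y : α)) ∧
      (∑' y : {z : α // z ≠ x}, q x (y : α)) ≤ - q x x

/-- A q-matrix is conservative if each of its rows sums to zero. -/
def IsConservative {α : Type*} (q : α → α → ℝ) : Prop :=
  ∀ x : α, (∑' y : {z : α // z ≠ x}, q x (y : α)) = - q x x

/-- Reachability: `y` is reachable from `x` through a chain of positive rates. -/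
def Reaches {α : Type*} (q : α → α → ℝ) : α → α → Prop :=
  Relation.ReflTransGen (fun a b => 0 < q a b)

/-- Two states communicate if each is reachable from the other. -/
def Communicates {α : Type*} (q : α → α → ℝ) (x y : α) : Prop :=
  Reaches q x y ∧ Reaches q y x

/-- A communicating class: an equivalence class of the communication relation. -/
def IsCommClass {α : Type*} (q : α → α → ℝ) (C : Set α) : Prop :=
  ∃ x : α, C = {y | Communicates q x y}

/-- A closed communicating class: no positive rate leads out of it. -/
def IsClosedCommClass {α : Type*} (q : α → α → ℝ) (C : Set α) : Prop :=
  IsCommClass q C ∧ ∀ x ∈ C, ∀ y ∉ C, q x y = 0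

/-- Irreducibility: every state is reachable from every state. -/
def IsIrreducibleQ {α : Type*} (q : α → α → ℝ) : Prop :=
  ∀ x y : α, Reaches q x y

/-- The last-column-block-augmented northwest-corner truncation `ₙQ` of `Q`. -/
noncomputable def LCtrunc (S0 S1 n : ℕ) (q : BState S0 S1 → BState S0 S1 → ℝ)
    (x y : BState S0 S1) : ℝ :=
  if y.1.1 < n then q x y
  else if y.1.1 = n then
    q x y + ∑' m : ℕ,
      if h : (n < m ∧ m ≠ x.1.1) ∧ y.1.2 ≤ (if m = 0 then S0 else S1)
        then q x ⟨(m, y.1.2), h.2⟩ else 0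
  else if y.1.1 = x.1.1 then q x y else 0

section CommunicatingClasses

variable {α : Type*} {q : α → α → ℝ} {A C L : Set α} {x y : α}

lemma Reaches.mem_of_closed (h : Reaches q x y) (hA : ∀ a ∈ A, ∀ b ∉ A, q a b = 0)
    (hx : x ∈ A) : y ∈ A := by
  induction h with
  | refl => exact hx
  | tail _ hbc ih => exact by_contra fun hc => hbc.ne' (hA _ ih _ hc)

lemma IsCommClass.nonempty (hC : IsCommClass q C) : C.Nonempty := by
  obtain ⟨x, rfl⟩ := hC
  exact ⟨x, .refl, .refl⟩

lemma IsCommClass.eq_setOf_communicates (hC : IsCommClass q C) (hx : x ∈ C) :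
    C = {y | Communicates q x y} := by
  obtain ⟨a, rfl⟩ := hC
  ext y
  exact ⟨fun h => ⟨hx.2.trans h.1, h.2.trans hx.1⟩, fun h => ⟨hx.1.trans h.1, h.2.trans hx.2⟩⟩

lemma IsCommClass.subset_of_closed (hC : IsCommClass q C) (hA : ∀ a ∈ A, ∀ b ∉ A, q a b = 0)
    (hCA : (C ∩ A).Nonempty) : C ⊆ A := by
  obtain ⟨z, hzC, hzA⟩ := hCA
  rw [hC.eq_setOf_communicates hzC]
  exact fun y hy => hy.1.mem_of_closed hA hzA

lemma IsClosedCommClass.inter_nonempty (hC : IsClosedCommClass q C)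
    (hL : ∀ x ∈ C, ∃ z ∈ L, Reaches q x z) : (C ∩ L).Nonempty := by
  obtain ⟨x, hx⟩ := hC.1.nonempty
  obtain ⟨z, hzL, hxz⟩ := hL x hx
  exact ⟨z, hxz.mem_of_closed hC.2 hx, hzL⟩

lemma setOf_isCommClass_inter_nonempty_subset (q : α → α → ℝ) (L : Set α) :
    {C | IsCommClass q C ∧ (C ∩ L).Nonempty} ⊆ (fun x => {y | Communicates q x y}) '' L := by
  rintro C ⟨hC, x, hxC, hxL⟩
  exact ⟨x, hxL, (hC.eq_setOf_communicates hxC).symm⟩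

lemma isClosedCommClass_setOf_communicates (hq : ∀ x y, x ≠ y → 0 ≤ q x y)
    (hx : ∀ y, Reaches q x y → Reaches q y x) :
    IsClosedCommClass q {y | Communicates q x y} := by
  refine ⟨⟨x, rfl⟩, fun a ha b hb => ?_⟩
  have hab : a ≠ b := fun h => hb (h ▸ ha)
  refine le_antisymm (not_lt.1 fun hpos => hb ?_) (hq a b hab)
  have hxb : Reaches q x b := ha.1.tail hpos
  exact ⟨hxb, hx b hxb⟩

lemma exists_isClosedCommClass_of_finite_reachable (hq : ∀ x y, x ≠ y → 0 ≤ q x y)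
    (hfin : {y | Reaches q x y}.Finite) : ∃ C, IsClosedCommClass q C := by
  obtain ⟨y, hxy, hmin⟩ := hfin.exists_minimalFor (fun y => {z | Reaches q y z}) _ ⟨x, .refl⟩
  refine ⟨_, isClosedCommClass_setOf_communicates (x := y) hq fun z hyz => ?_⟩
  have hzy : {w | Reaches q z w} ⊆ {w | Reaches q y w} := fun w hzw => hyz.trans hzw
  exact hmin (hxy.trans hyz) hzy .refl

end CommunicatingClasses

namespace BState

variable {S0 S1 n : ℕ}

/-- The level `L_n` of the state space. -/
def level (S0 S1 n : ℕ) : Set (BState S0 S1) := {x | x.1.1 = n}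

/-- The union `F_n` of the levels `L_0, …, L_n`. -/
def levelsLE (S0 S1 n : ℕ) : Set (BState S0 S1) := {x | x.1.1 ≤ n}

lemma level_subset_levelsLE : level S0 S1 n ⊆ levelsLE S0 S1 n := fun _ => le_of_eq

lemma phase_le_of_level_ne_zero {x : BState S0 S1} (hx : x.1.1 ≠ 0) : x.1.2 ≤ S1 := by
  simpa only [if_neg hx] using x.2

lemma exists_mem_level_phase_eq (hn : n ≠ 0) {y : BState S0 S1} (hy : y.1.1 ≠ 0) :
    ∃ z ∈ level S0 S1 n, z.1.2 = y.1.2 :=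
  ⟨⟨(n, y.1.2), by simpa only [if_neg hn] using phase_le_of_level_ne_zero hy⟩, rfl, rfl⟩

lemma finite_levelsLE (S0 S1 n : ℕ) : (levelsLE S0 S1 n).Finite := by
  refine (((Set.finite_Iic n).prod (Set.finite_Iic (max S0 S1))).preimage
    Subtype.val_injective.injOn).subset fun x hx => ⟨hx, x.2.trans ?_⟩
  split_ifs
  · exact le_max_left S0 S1
  · exact le_max_right S0 S1

lemma ncard_level_le (S0 S1 : ℕ) (hn : n ≠ 0) : (level S0 S1 n).ncard ≤ S1 + 1 := by
  rw [← Set.ncard_Iic_nat S1]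
  refine Set.ncard_le_ncard_of_injOn (fun x => x.1.2)
    (fun x hx => phase_le_of_level_ne_zero (hx.trans_ne hn)) fun x hx y hy hxy => ?_
  exact Subtype.ext (Prod.ext (hx.trans hy.symm) hxy)

end BState

section Truncation

open BState

variable {S0 S1 n : ℕ} {q : BState S0 S1 → BState S0 S1 → ℝ} {x y z : BState S0 S1}

/-- The `m`-th summand of the series that `LCtrunc` adds to the rate from `x` to `(n, j)`: the rate
from `x` to `(m, j)` if `m > n` is not the level of `x`, and `0` otherwise. -/
noncomputable def redirectedRate (n : ℕ) (q : BState S0 S1 → BState S0 S1 → ℝ) (x : BState S0 S1)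
    (j m : ℕ) : ℝ :=
  if h : (n < m ∧ m ≠ x.1.1) ∧ j ≤ (if m = 0 then S0 else S1)
    then q x ⟨(m, j), h.2⟩ else 0

lemma redirectedRate_nonneg (hq : ∀ x y, x ≠ y → 0 ≤ q x y) (x : BState S0 S1) (j m : ℕ) :
    0 ≤ redirectedRate n q x j m :=
  dite_nonneg (fun h => hq _ _ fun hx => h.1.2 (by rw [hx])) fun _ => le_rfl

lemma redirectedRate_of_lt_level (hy : n < y.1.1) (hyx : y.1.1 ≠ x.1.1) :
    redirectedRate n q x y.1.2 y.1.1 = q x y :=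
  dif_pos ⟨⟨hy, hyx⟩, y.2⟩

lemma summable_redirectedRate (hx : Summable fun y : {z : BState S0 S1 // z ≠ x} => q x y)
    (j : ℕ) : Summable (redirectedRate n q x j) := by
  let s : Set ℕ := {m | (n < m ∧ m ≠ x.1.1) ∧ j ≤ (if m = 0 then S0 else S1)}
  let g : s → {z : BState S0 S1 // z ≠ x} := fun m =>
    ⟨⟨(m, j), m.2.2⟩, fun h => m.2.1.2 (by rw [← h])⟩
  have hg : Function.Injective g := fun a b hab => Subtype.ext (by simpa [g] using hab)
  have hs : ∀ m ∉ Set.range (Subtype.val : s → ℕ), redirectedRate n q x j m = 0 :=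
    fun m hm => dif_neg fun h => hm ⟨⟨m, h⟩, rfl⟩
  refine (Subtype.val_injective.summable_iff hs).1 ((hx.comp_injective hg).congr fun m => ?_)
  exact (redirectedRate_of_lt_level (x := x) (y := g m) m.2.1.1 m.2.1.2).symm

lemma LCtrunc_of_level_lt (hy : y.1.1 < n) : LCtrunc S0 S1 n q x y = q x y := if_pos hy

lemma LCtrunc_of_mem_level (hy : y ∈ level S0 S1 n) :
    LCtrunc S0 S1 n q x y = q x y + ∑' m, redirectedRate n q x y.1.2 m :=
  (if_neg hy.not_lt).trans (if_pos hy)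

lemma LCtrunc_of_lt_level (hy : n < y.1.1) :
    LCtrunc S0 S1 n q x y = if y.1.1 = x.1.1 then q x y else 0 :=
  (if_neg hy.not_gt).trans (if_neg hy.ne')

lemma le_LCtrunc (hq : ∀ x y, x ≠ y → 0 ≤ q x y) (hy : y.1.1 ≤ n ∨ y.1.1 = x.1.1) :
    q x y ≤ LCtrunc S0 S1 n q x y := by
  rcases lt_trichotomy y.1.1 n with hlt | heq | hgt
  · exact (LCtrunc_of_level_lt hlt).ge
  · rw [LCtrunc_of_mem_level heq]
    exact le_add_of_nonneg_right (tsum_nonneg (redirectedRate_nonneg hq x _))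
  · rw [LCtrunc_of_lt_level hgt, if_pos (hy.resolve_left hgt.not_ge)]

lemma LCtrunc_nonneg (hq : ∀ x y, x ≠ y → 0 ≤ q x y) (hxy : x ≠ y) :
    0 ≤ LCtrunc S0 S1 n q x y := by
  by_cases hy : y.1.1 ≤ n ∨ y.1.1 = x.1.1
  · exact (hq x y hxy).trans (le_LCtrunc hq hy)
  · obtain ⟨hlt, hne⟩ := not_or.1 hy
    rw [LCtrunc_of_lt_level (not_le.1 hlt), if_neg hne]

lemma le_LCtrunc_of_phase_eq (hq : IsQMatrix q) (hz : z ∈ level S0 S1 n) (hxz : x ≠ z)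
    (hy : n < y.1.1) (hyx : y.1.1 ≠ x.1.1) (hzy : z.1.2 = y.1.2) :
    q x y ≤ LCtrunc S0 S1 n q x z := by
  rw [LCtrunc_of_mem_level hz, hzy]
  calc q x y = redirectedRate n q x y.1.2 y.1.1 :=
      (redirectedRate_of_lt_level hy hyx).symm
    _ ≤ ∑' m, redirectedRate n q x y.1.2 m :=
      (summable_redirectedRate (hq.2 x).1 _).le_tsum _
        fun m _ => redirectedRate_nonneg hq.1 x _ m
    _ ≤ q x z + ∑' m, redirectedRate n q x y.1.2 m := le_add_of_nonneg_left (hq.1 x z hxz)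

lemma LCtrunc_pos_or_exists_mem_level (hq : IsQMatrix q) (hn : n ≠ 0) (hx : x ∉ level S0 S1 n)
    (hxy : 0 < q x y) :
    0 < LCtrunc S0 S1 n q x y ∨ ∃ z ∈ level S0 S1 n, 0 < LCtrunc S0 S1 n q x z := by
  by_cases hy : y.1.1 ≤ n ∨ y.1.1 = x.1.1
  · exact .inl (hxy.trans_le (le_LCtrunc hq.1 hy))
  · obtain ⟨hlt, hne⟩ := not_or.1 hy
    obtain ⟨z, hz, hzy⟩ := exists_mem_level_phase_eq hn (y := y) (by lia)
    have hxz : x ≠ z := fun h => hx (h ▸ hz)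
    exact .inr ⟨z, hz, hxy.trans_le (le_LCtrunc_of_phase_eq hq hz hxz (not_le.1 hlt) hne hzy)⟩

lemma Reaches.exists_mem_level_reaches_LCtrunc (hq : IsQMatrix q) (hn : n ≠ 0)
    (hz : z ∈ level S0 S1 n) (h : Reaches q x z) :
    ∃ w ∈ level S0 S1 n, Reaches (LCtrunc S0 S1 n q) x w := by
  induction h using Relation.ReflTransGen.head_induction_on with
  | refl => exact ⟨z, hz, .refl⟩
  | @head a b hab _ ih =>
    by_cases ha : a ∈ level S0 S1 n
    · exact ⟨a, ha, .refl⟩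
    · rcases LCtrunc_pos_or_exists_mem_level hq hn ha hab with hpos | ⟨w, hw, hpos⟩
      · obtain ⟨w, hw, hbw⟩ := ih
        exact ⟨w, hw, .head hpos hbw⟩
      · exact ⟨w, hw, .single hpos⟩

lemma LCtrunc_eq_zero_of_notMem_levelsLE (hx : x ∈ levelsLE S0 S1 n) (hy : y ∉ levelsLE S0 S1 n) :
    LCtrunc S0 S1 n q x y = 0 := by
  have hny : n < y.1.1 := not_le.1 hy
  rw [LCtrunc_of_lt_level hny, if_neg (lt_of_le_of_lt hx hny).ne']

end Truncation

open BState in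
theorem stmt0_general {S0 S1 n : ℕ} {q : BState S0 S1 → BState S0 S1 → ℝ} (hq : IsQMatrix q)
    (hn : n ≠ 0) (hreach : ∀ x, ∃ z : BState S0 S1, z.1.1 = n ∧ Reaches q x z) :
    (∀ C : Set (BState S0 S1), IsClosedCommClass (LCtrunc S0 S1 n q) C →
      (∀ x ∈ C, x.1.1 ≤ n) ∧ ∃ x ∈ C, x.1.1 = n) ∧
    (∃ C : Set (BState S0 S1), IsClosedCommClass (LCtrunc S0 S1 n q) C) ∧
    {C : Set (BState S0 S1) | IsClosedCommClass (LCtrunc S0 S1 n q) C}.Finite ∧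
    {C : Set (BState S0 S1) | IsClosedCommClass (LCtrunc S0 S1 n q) C}.ncard ≤ S1 + 1 := by
  have hclosed : ∀ x ∈ levelsLE S0 S1 n, ∀ y ∉ levelsLE S0 S1 n, LCtrunc S0 S1 n q x y = 0 :=
    fun _ hx _ hy => LCtrunc_eq_zero_of_notMem_levelsLE hx hy
  have hlevel (x) : ∃ w ∈ level S0 S1 n, Reaches (LCtrunc S0 S1 n q) x w :=
    let ⟨_, hz, hxz⟩ := hreach x
    hxz.exists_mem_level_reaches_LCtrunc hq hn hz
  have hmeets (C) (hC : IsClosedCommClass (LCtrunc S0 S1 n q) C) : (C ∩ level S0 S1 n).Nonempty :=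
    hC.inter_nonempty fun x _ => hlevel x
  have hfin : (level S0 S1 n).Finite := (finite_levelsLE S0 S1 n).subset level_subset_levelsLE
  have hsub : {C | IsClosedCommClass (LCtrunc S0 S1 n q) C} ⊆
      (fun x => {y | Communicates (LCtrunc S0 S1 n q) x y}) '' level S0 S1 n :=
    fun C hC => setOf_isCommClass_inter_nonempty_subset _ _ ⟨hC.1, hmeets C hC⟩
  refine ⟨fun C hC => ⟨?_, hmeets C hC⟩, ?_, (hfin.image _).subset hsub, ?_⟩
  · exact hC.1.subset_of_closed hclosed
      ((hmeets C hC).mono (Set.inter_subset_inter_right C level_subset_levelsLE))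
  · have hzero : (⟨(0, 0), Nat.zero_le _⟩ : BState S0 S1) ∈ levelsLE S0 S1 n := Nat.zero_le n
    exact exists_isClosedCommClass_of_finite_reachable (fun _ _ => LCtrunc_nonneg hq.1)
      ((finite_levelsLE S0 S1 n).subset fun y hy => hy.mem_of_closed hclosed hzero)
  · exact (Set.ncard_le_ncard hsub (hfin.image _)).trans
      ((Set.ncard_image_le hfin).trans (ncard_level_le S0 S1 hn))

/-- Every closed communicating class of the LC-block-augmented truncation of an
irreducible conservative q-matrix is contained in `F_n` and intersects level `L_n`;
consequently there is at least one closed communicating class and at most `S₁ + 1`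
of them. -/
theorem stmt0 (S0 S1 : ℕ) (q : BState S0 S1 → BState S0 S1 → ℝ)
    (hq : IsQMatrix q) (hcons : IsConservative q) (hirr : IsIrreducibleQ q)
    (n : ℕ) (hn : 1 ≤ n) :
    (∀ C : Set (BState S0 S1), IsClosedCommClass (LCtrunc S0 S1 n q) C →
      (∀ x ∈ C, x.1.1 ≤ n) ∧ ∃ x ∈ C, x.1.1 = n) ∧
    (∃ C : Set (BState S0 S1), IsClosedCommClass (LCtrunc S0 S1 n q) C) ∧
    {C : Set (BState S0 S1) | IsClosedCommClass (LCtrunc S0 S1 n q) C}.Finite ∧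
    {C : Set (BState S0 S1) | IsClosedCommClass (LCtrunc S0 S1 n q) C}.ncard ≤ S1 + 1 := by
  exact stmt0_general hq (Nat.one_le_iff_ne_zero.1 hn)
    fun x => ⟨⟨(n, 0), Nat.zero_le _⟩, rfl, hirr x _⟩
end

section
/- Let F be a countable set, D = (d(x;y))_{x,y∈F} a real matrix, π : F → [0,∞) with Σ_{x∈F} π(x) = 1, f : F → [1,∞) with Σ_{x} π(x) f(x) < ∞, v : F → [0,∞), and C ≥ 0. Suppose that for every x ∈ F one has Σ_{y} |d(x;y)| f(y) < ∞, and that for every ğ : F → ℝ with |ğ(y)| ≤ f(y) for all y and every x ∈ F, |Σ_{y} d(x;y) ğ(y)| ≤ (|Σ_{y} π(y) ğ(y)| + 1)(v(x) + C). Then for every g : F → ℝ with 0 ≤ g(y) ≤ f(y) for all y and every x ∈ F, Σ_{y} |d(x;y)| g(y) ≤ (Σ_{y} π(y) g(y) + 1)(v(x) + C). -/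
/-! Testing the hypothesis for a row `a` on `y ↦ sign (a y) * g y` turns its row sum into the
absolute row sum of `g`. The price is only in the weighted sum, which changes from
`∑ w g` to `|∑ w (sign a) g| ≤ ∑ w g`, and the bound is monotone in that quantity. -/

section

variable {F : Type*} {w f g h : F → ℝ}

lemma summable_mul_of_nonneg_of_le (hw : ∀ y, 0 ≤ w y) (hg : ∀ y, 0 ≤ g y ∧ g y ≤ f y)
    (hwf : Summable fun y => w y * f y) : Summable fun y => w y * g y :=
  hwf.of_nonneg_of_le (fun y => mul_nonneg (hw y) (hg y).1)
    fun y => mul_le_mul_of_nonneg_left (hg y).2 (hw y)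

lemma abs_tsum_mul_le_tsum_mul (hw : ∀ y, 0 ≤ w y) (hhg : ∀ y, |h y| ≤ g y)
    (hwg : Summable fun y => w y * g y) : |∑' y, w y * h y| ≤ ∑' y, w y * g y := by
  rw [← Real.norm_eq_abs]
  refine tsum_of_norm_bounded hwg.hasSum fun y => ?_
  rw [Real.norm_eq_abs, abs_mul, abs_of_nonneg (hw y)]
  exact mul_le_mul_of_nonneg_left (hhg y) (hw y)

end

lemma abs_sign_mul_le {R : Type*} [Ring R] [LinearOrder R] [IsOrderedAddMonoid R] (a b : R) :
    |(SignType.sign a : R) * b| ≤ |b| := by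
  rcases lt_trichotomy a 0 with ha | ha | ha <;> simp [ha]

theorem stmt2_general {F : Type*} {a w f g : F → ℝ} {Φ : ℝ → ℝ}
    (hΦ : MonotoneOn Φ (Set.Ici 0)) (hw : ∀ y, 0 ≤ w y)
    (hwf : Summable fun y => w y * f y) (haf : Summable fun y => |a y| * f y)
    (hrow : ∀ h : F → ℝ, (∀ y, |h y| ≤ f y) → |∑' y, a y * h y| ≤ Φ |∑' y, w y * h y|)
    (hg : ∀ y, 0 ≤ g y ∧ g y ≤ f y) :
    Summable (fun y => |a y| * g y) ∧ ∑' y, |a y| * g y ≤ Φ (∑' y, w y * g y) := by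
  refine ⟨summable_mul_of_nonneg_of_le (fun y => abs_nonneg (a y)) hg haf, ?_⟩
  let s : F → ℝ := fun y => SignType.sign (a y) * g y
  have hsg : ∀ y, |s y| ≤ g y := fun y =>
    (abs_sign_mul_le (a y) (g y)).trans_eq (abs_of_nonneg (hg y).1)
  have hweight : |∑' y, w y * s y| ≤ ∑' y, w y * g y :=
    abs_tsum_mul_le_tsum_mul hw hsg (summable_mul_of_nonneg_of_le hw hg hwf)
  calc ∑' y, |a y| * g y
      = ∑' y, a y * s y := by simp only [s, ← mul_assoc, self_mul_sign]
    _ ≤ |∑' y, a y * s y| := le_abs_self _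
    _ ≤ Φ |∑' y, w y * s y| := hrow s fun y => (hsg y).trans (hg y).2
    _ ≤ Φ (∑' y, w y * g y) :=
      hΦ (Set.mem_Ici.2 (abs_nonneg _)) (Set.mem_Ici.2 ((abs_nonneg _).trans hweight)) hweight

/-- Abstract form of the paper's Lemma 2.3: the row-sum bound for the deviation
matrix `D` against functions `ğ` with `|ğ| ≤ f` transfers to the absolute row
sums against functions `g` with `0 ≤ g ≤ f`. -/
theorem stmt2 {F : Type*} [Countable F]
    (d : F → F → ℝ) (pi f v : F → ℝ) (C : ℝ)
    (hpi0 : ∀ x, 0 ≤ pi x) (hpi1 : (∑' x, pi x) = 1)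
    (hf : ∀ x, 1 ≤ f x) (hpif : Summable (fun x => pi x * f x))
    (hv : ∀ x, 0 ≤ v x) (hC : 0 ≤ C)
    (hdf : ∀ x, Summable (fun y => |d x y| * f y))
    (hrow : ∀ g : F → ℝ, (∀ y, |g y| ≤ f y) → ∀ x,
      |∑' y, d x y * g y| ≤ (|∑' y, pi y * g y| + 1) * (v x + C)) :
    ∀ g : F → ℝ, (∀ y, 0 ≤ g y ∧ g y ≤ f y) → ∀ x,
      (∑' y, |d x y| * g y) ≤ ((∑' y, pi y * g y) + 1) * (v x + C) := by
  intro g hg x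
  have hΦ : Monotone fun t : ℝ => (t + 1) * (v x + C) :=
    (monotone_id.add_const 1).mul_const (add_nonneg (hv x) hC)
  exact (stmt2_general (hΦ.monotoneOn _) hpi0 hpif (hdf x) (fun h hh => hrow h hh x) hg).2
end

section
/- Let Q be a q-matrix on F with the given block structure, n ≥ 1, and ₙQ its LC-block-augmented truncation. Let π, ₙπ : F → [0,∞) be probability vectors (each summing to 1) with ₙπ(k,i) = 0 whenever k > n. Let f : F → [1,∞) with Σ_{x} π(x) f(x) < ∞, v : F → [0,∞), and C ≥ 0. Assume: (a) for every x ∈ F, Σ_{y} |d(x;y)| f(y) < ∞, and for every g : F → ℝ with 0 ≤ g ≤ f pointwise and every x ∈ F, Σ_{y} |d(x;y)| g(y) ≤ (Σ_{z} π(z) g(z) + 1)(v(x) + C); (b) for every (k,i) ∈ F_n, Σ_{(m,j)∈F̄_n} q(k,i;m,j) v(m,j) < ∞; (c) the deviation identity holds: for every y ∈ F, ₙπ(y) − π(y) = Σ_{x∈F} Σ_{z∈F} ₙπ(x)(ₙq(x;z) − q(x;z)) d(z;y), all series converging absolutely. Then for every g : F → ℝ with 0 ≤ g ≤ f pointwise,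 Σ_{y} |π(y) − ₙπ(y)| g(y) ≤ ((Σ_{z} π(z) g(z) + 1)/2) · E(n), where E(n) := 2 Σ_{(k,i)∈F_n} ₙπ(k,i) Σ_{(m,j)∈F̄_n} q(k,i;m,j) (v(m,j) + v(n,j) + 2C). -/
/-- The value of `v` at state `(k, j)`, when `(k, j) ∈ F` (otherwise `0`). -/
noncomputable def vAt (S0 S1 : ℕ) (v : BState S0 S1 → ℝ) (k j : ℕ) : ℝ :=
  if h : j ≤ (if k = 0 then S0 else S1) then v ⟨(k, j), h⟩ else 0

/-- The error decay function
`E(n) = 2 Σ_{(k,i)∈F_n} ₙπ(k,i) Σ_{(m,j)∈F̄_n} q(k,i;m,j) (v(m,j) + v(n,j) + 2C)`. -/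
noncomputable def Efun (S0 S1 n : ℕ) (q : BState S0 S1 → BState S0 S1 → ℝ)
    (npi v : BState S0 S1 → ℝ) (C : ℝ) : ℝ :=
  2 * ∑' x : BState S0 S1,
    (if x.1.1 ≤ n then
      npi x * ∑' y : BState S0 S1,
        (if n < y.1.1 then q x y * (v y + vAt S0 S1 v n y.1.2 + 2 * C) else 0)
     else 0)

open scoped ENNReal

section Sums

variable {ι κ β : Type*}

lemma tsum_enorm_mul_le_of_hasSum {R : Type*} [NormedRing R] [NormMulClass R] {a : ι → R}
    {b : ι → κ → R} {d : κ → β → R} {μ : β → R}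
    (h : ∀ y, HasSum (fun p : ι × κ => a p.1 * b p.1 p.2 * d p.2 y) (μ y)) (G : β → ℝ≥0∞) :
    ∑' y, ‖μ y‖ₑ * G y ≤ ∑' x, ‖a x‖ₑ * ∑' z, ‖b x z‖ₑ * ∑' y, ‖d z y‖ₑ * G y := by
  have pointwise (y : β) : ‖μ y‖ₑ ≤ ∑' x, ∑' z, ‖a x‖ₑ * (‖b x z‖ₑ * ‖d z y‖ₑ) := by
    rw [← ENNReal.tsum_prod]
    exact (h y).enorm_le_of_bounded ENNReal.summable.hasSum fun p => by
      rw [enorm_mul, enorm_mul, mul_assoc]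
  calc ∑' y, ‖μ y‖ₑ * G y
      ≤ ∑' y, ∑' x, ∑' z, ‖a x‖ₑ * (‖b x z‖ₑ * (‖d z y‖ₑ * G y)) := by
        refine ENNReal.tsum_le_tsum fun y => (mul_le_mul_left (pointwise y) (G y)).trans_eq ?_
        simp only [← ENNReal.tsum_mul_right, mul_assoc]
    _ = ∑' x, ∑' z, ∑' y, ‖a x‖ₑ * (‖b x z‖ₑ * (‖d z y‖ₑ * G y)) := by
        rw [ENNReal.tsum_comm]
        exact tsum_congr fun x => ENNReal.tsum_comm
    _ = ∑' x, ‖a x‖ₑ * ∑' z, ‖b x z‖ₑ * ∑' y, ‖d z y‖ₑ * G y := by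
        simp only [ENNReal.tsum_mul_left]

lemma tsum_tsum_fiber_mul (p : ι → κ) (c : ι → ℝ≥0∞) (h : κ → ℝ≥0∞) :
    ∑' z, (∑' w : p ⁻¹' {z}, c w) * h z = ∑' w, c w * h (p w) := by
  rw [← ENNReal.tsum_fiberwise (fun w => c w * h (p w)) p]
  refine tsum_congr fun z => ?_
  rw [← ENNReal.tsum_mul_right]
  exact tsum_congr fun ⟨w, hw⟩ => by rw [show p w = z from hw]

lemma tsum_mul_le_of_le_add_tsum_fiber {p : ι → ι} {a c : ι → ℝ≥0∞}
    (hac : ∀ z, a z ≤ c z + ∑' w : p ⁻¹' {z}, c w) (h : ι → ℝ≥0∞) :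
    ∑' z, a z * h z ≤ ∑' w, c w * (h w + h (p w)) :=
  calc ∑' z, a z * h z ≤ ∑' z, (c z * h z + (∑' w : p ⁻¹' {z}, c w) * h z) :=
        ENNReal.tsum_le_tsum fun z => (mul_le_mul_left (hac z) (h z)).trans_eq (add_mul ..)
    _ = ∑' w, c w * (h w + h (p w)) := by
        rw [ENNReal.tsum_add, tsum_tsum_fiber_mul, ← ENNReal.tsum_add]
        simp only [mul_add]

lemma summable_and_tsum_le_of_tsum_ofReal_le {f : ι → ℝ} {c : ℝ} (hf : 0 ≤ f) (hc : 0 ≤ c)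
    (h : ∑' i, ENNReal.ofReal (f i) ≤ ENNReal.ofReal c) : Summable f ∧ ∑' i, f i ≤ c := by
  have partial_sum_le (s : Finset ι) : ∑ i ∈ s, f i ≤ c := by
    rw [← ENNReal.ofReal_le_ofReal_iff hc, ENNReal.ofReal_sum_of_nonneg fun i _ => hf i]
    exact (ENNReal.sum_le_tsum s).trans h
  exact ⟨summable_of_sum_le hf partial_sum_le, Real.tsum_le_of_sum_le hf partial_sum_le⟩

lemma tsum_enorm_mul_ofReal_le {a g : ι → ℝ} {c : ℝ} (hg : ∀ y, 0 ≤ g y)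
    (hag : Summable fun y => |a y| * g y) (hc : ∑' y, |a y| * g y ≤ c) :
    ∑' y, ‖a y‖ₑ * ENNReal.ofReal (g y) ≤ ENNReal.ofReal c := by
  refine le_of_eq_of_le ?_ (ENNReal.ofReal_le_ofReal hc)
  rw [ENNReal.ofReal_tsum_of_nonneg (fun y => mul_nonneg (abs_nonneg _) (hg y)) hag]
  simp only [ENNReal.ofReal_mul (abs_nonneg _), Real.enorm_eq_ofReal_abs]

end Sums

section Truncation

variable {S0 S1 n : ℕ}

namespace BState

lemma snd_le_of_pos {w : BState S0 S1} (hw : 0 < w.1.1) : w.1.2 ≤ S1 := by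
  simpa only [if_neg hw.ne'] using w.2

lemma finite_setOf_level_le (S0 S1 n : ℕ) : {x : BState S0 S1 | x.1.1 ≤ n}.Finite := by
  refine Set.Finite.of_finite_image (f := Subtype.val) ?_ Subtype.val_injective.injOn
  refine ((Set.finite_Iic n).prod (Set.finite_Iic (max S0 S1))).subset ?_
  rintro _ ⟨x, hx, rfl⟩
  refine ⟨hx, x.2.trans ?_⟩
  split_ifs
  exacts [le_max_left .., le_max_right ..]

lemma summable_of_eq_zero_of_lt_level {a : BState S0 S1 → ℝ} (ha : ∀ x, n < x.1.1 → a x = 0) :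
    Summable a :=
  summable_of_hasFiniteSupport <| (finite_setOf_level_le S0 S1 n).subset fun x hx =>
    not_lt.1 fun hxn => hx (ha x hxn)

/-- The projection `(m, j) ↦ (n, j)` onto the level `L_n`, along which the LC-block augmentation
redirects the transitions leaving `F_n`. A state with `(n, j) ∉ F` is left fixed. -/
def levelProj (n : ℕ) (w : BState S0 S1) : BState S0 S1 :=
  if h : w.1.2 ≤ if n = 0 then S0 else S1 then ⟨(n, w.1.2), h⟩ else w

lemma levelProj_val (hn : 1 ≤ n) {w : BState S0 S1} (hw : n < w.1.1) :
    (levelProj n w).1 = (n, w.1.2) := by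
  have hj : w.1.2 ≤ if n = 0 then S0 else S1 := by
    simpa only [if_neg (Nat.ne_of_gt hn)] using snd_le_of_pos (Nat.zero_lt_of_lt hw)
  rw [levelProj, dif_pos hj]

end BState

open BState

lemma IsQMatrix.summable_row {α : Type*} {q : α → α → ℝ} (hq : IsQMatrix q) (x : α) :
    Summable (q x) :=
  (Set.finite_singleton x).summable_compl_iff.1 (hq.2 x).1

variable {q d : BState S0 S1 → BState S0 S1 → ℝ} {x : BState S0 S1}

/-- The rate `q(x; w)` of the transition from `x` to a state `w ∈ F̄_n`, extended by `0` to
`w ∈ F_n`. For `x ∈ F_n` these are the transitions which the truncation redirects. -/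
def exitRate (n : ℕ) (q : BState S0 S1 → BState S0 S1 → ℝ) (x w : BState S0 S1) : ℝ :=
  if n < w.1.1 then q x w else 0

lemma exitRate_mul (n : ℕ) (q : BState S0 S1 → BState S0 S1 → ℝ) (x w : BState S0 S1) (r : ℝ) :
    exitRate n q x w * r = if n < w.1.1 then q x w * r else 0 := by
  rw [exitRate, ite_mul, zero_mul]

lemma exitRate_nonneg (hq : IsQMatrix q) (hx : x.1.1 ≤ n) (w : BState S0 S1) :
    0 ≤ exitRate n q x w := by
  unfold exitRate
  split_ifs with hw
  · exact hq.1 x w (by rintro rfl; exact hx.not_gt hw)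
  · exact le_rfl

lemma summable_exitRate (hq : IsQMatrix q) (n : ℕ) (x : BState S0 S1) :
    Summable (exitRate n q x) :=
  ((hq.summable_row x).indicator {w | n < w.1.1}).congr fun w => by
    rw [exitRate, Set.indicator_apply]
    rfl

lemma exitRate_mul_vAt (hn : 1 ≤ n) (v : BState S0 S1 → ℝ) (w : BState S0 S1) :
    exitRate n q x w * vAt S0 S1 v n w.1.2 = exitRate n q x w * v (levelProj n w) := by
  simp only [exitRate_mul]
  split_ifs with hw
  · have hproj := levelProj_val hn hw
    have hj := hproj ▸ (levelProj n w).2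
    rw [vAt, dif_pos hj]
    congr 2
    exact Subtype.ext hproj.symm
  · rfl

lemma summable_exitRate_mul_levelProj (hn : 1 ≤ n) (hq : IsQMatrix q) (x : BState S0 S1)
    (u : BState S0 S1 → ℝ) : Summable fun w => exitRate n q x w * u (levelProj n w) := by
  obtain ⟨B, hB⟩ := ((finite_setOf_level_le S0 S1 n).image fun z => |u z|).bddAbove
  refine .of_norm_bounded ((summable_exitRate hq n x).norm.mul_right B) fun w => ?_
  rw [norm_mul]
  by_cases hw : n < w.1.1
  · have u_le : |u (levelProj n w)| ≤ B :=
      hB ⟨levelProj n w, (congrArg Prod.fst (levelProj_val hn hw)).le, rfl⟩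
    exact mul_le_mul_of_nonneg_left u_le (norm_nonneg _)
  · simp only [exitRate, if_neg hw, norm_zero, zero_mul, le_refl]

lemma enorm_LCtrunc_sub_le_of_level_eq (hn : 1 ≤ n) {z : BState S0 S1} (hz : z.1.1 = n) :
    ‖LCtrunc S0 S1 n q x z - q x z‖ₑ ≤ ∑' w : levelProj n ⁻¹' {z}, ‖exitRate n q x w‖ₑ := by
  rw [LCtrunc, if_neg hz.not_lt, if_pos hz, add_sub_cancel_left]
  refine enorm_tsum_le_tsum_enorm.trans ?_
  rw [← ENNReal.tsum_fiberwise (fun w : levelProj n ⁻¹' {z} => ‖exitRate n q x w‖ₑ)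
    (fun w => w.1.1.1)]
  refine ENNReal.tsum_le_tsum fun m => ?_
  by_cases hm : (n < m ∧ m ≠ x.1.1) ∧ z.1.2 ≤ if m = 0 then S0 else S1
  · have hproj : levelProj n ⟨(m, z.1.2), hm.2⟩ = z :=
      Subtype.ext <| (levelProj_val hn hm.1.1).trans <| Prod.ext hz.symm rfl
    refine le_of_eq_of_le ?_ (ENNReal.le_tsum ⟨⟨⟨(m, z.1.2), hm.2⟩, hproj⟩, rfl⟩)
    rw [dif_pos hm, exitRate, if_pos hm.1.1]
  · rw [dif_neg hm, enorm_zero]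
    exact zero_le

lemma enorm_LCtrunc_sub_le (hn : 1 ≤ n) (hx : x.1.1 ≤ n) (z : BState S0 S1) :
    ‖LCtrunc S0 S1 n q x z - q x z‖ₑ ≤
      ‖exitRate n q x z‖ₑ + ∑' w : levelProj n ⁻¹' {z}, ‖exitRate n q x w‖ₑ := by
  rcases lt_trichotomy z.1.1 n with hz | hz | hz
  · rw [LCtrunc, if_pos hz, sub_self, enorm_zero]
    exact zero_le
  · exact (enorm_LCtrunc_sub_le_of_level_eq hn hz).trans le_add_self
  · rw [LCtrunc, if_neg hz.not_gt, if_neg hz.ne', if_neg (hx.trans_lt hz).ne', zero_sub, enorm_neg,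
      exitRate, if_pos hz]
    exact le_self_add

lemma tsum_enorm_LCtrunc_sub_mul_le (hn : 1 ≤ n) (hq : IsQMatrix q) (hx : x.1.1 ≤ n)
    {u : BState S0 S1 → ℝ} (hu : ∀ z, 0 ≤ u z)
    (hqu : Summable fun w => exitRate n q x w * u w) :
    ∑' z, ‖LCtrunc S0 S1 n q x z - q x z‖ₑ * ENNReal.ofReal (u z) ≤
      ENNReal.ofReal (∑' w, exitRate n q x w * (u w + u (levelProj n w))) := by
  refine (tsum_mul_le_of_le_add_tsum_fiber (enorm_LCtrunc_sub_le hn hx) _).trans_eq ?_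
  have summable_sum : Summable fun w => exitRate n q x w * (u w + u (levelProj n w)) := by
    simpa only [mul_add] using hqu.add (summable_exitRate_mul_levelProj hn hq x u)
  rw [ENNReal.ofReal_tsum_of_nonneg (fun w => mul_nonneg (exitRate_nonneg hq hx w)
    (add_nonneg (hu _) (hu _))) summable_sum]
  refine tsum_congr fun w => ?_
  rw [ENNReal.ofReal_mul (exitRate_nonneg hq hx w), ENNReal.ofReal_add (hu _) (hu _),
    Real.enorm_eq_ofReal (exitRate_nonneg hq hx w)]

variable {npi g : BState S0 S1 → ℝ}

theorem tsum_abs_mul_le_of_hasSum_LCtrunc_sub {μ u : BState S0 S1 → ℝ} (hn : 1 ≤ n)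
    (hq : IsQMatrix q) (hnpi : ∀ x, 0 ≤ npi x) (hvanish : ∀ x, n < x.1.1 → npi x = 0)
    (hμ : ∀ y, HasSum (fun p : BState S0 S1 × BState S0 S1 =>
      npi p.1 * (LCtrunc S0 S1 n q p.1 p.2 - q p.1 p.2) * d p.2 y) (μ y))
    (hg : ∀ y, 0 ≤ g y) (hdg : ∀ z, Summable fun y => |d z y| * g y)
    (hdu : ∀ z, ∑' y, |d z y| * g y ≤ u z)
    (hqu : ∀ x : BState S0 S1, x.1.1 ≤ n → Summable fun w => exitRate n q x w * u w) :
    (Summable fun y => |μ y| * g y) ∧ ∑' y, |μ y| * g y ≤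
      ∑' x, npi x * ∑' w, exitRate n q x w * (u w + u (levelProj n w)) := by
  have hu (z : BState S0 S1) : 0 ≤ u z :=
    (tsum_nonneg fun y => mul_nonneg (abs_nonneg _) (hg y)).trans (hdu z)
  set A : BState S0 S1 → ℝ :=
    fun x => npi x * ∑' w, exitRate n q x w * (u w + u (levelProj n w)) with hA
  have A_eq_zero (x : BState S0 S1) (hx : n < x.1.1) : A x = 0 := by
    simp only [hA, hvanish x hx, zero_mul]
  have A_nonneg (x : BState S0 S1) : 0 ≤ A x := by
    rcases le_or_gt x.1.1 n with hx | hx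
    · exact mul_nonneg (hnpi x) <| tsum_nonneg fun w =>
        mul_nonneg (exitRate_nonneg hq hx w) (add_nonneg (hu _) (hu _))
    · exact (A_eq_zero x hx).ge
  refine summable_and_tsum_le_of_tsum_ofReal_le
    (fun y => mul_nonneg (abs_nonneg _) (hg y)) (tsum_nonneg A_nonneg) ?_
  calc ∑' y, ENNReal.ofReal (|μ y| * g y)
      = ∑' y, ‖μ y‖ₑ * ENNReal.ofReal (g y) := by
        simp only [ENNReal.ofReal_mul (abs_nonneg _), Real.enorm_eq_ofReal_abs]
    _ ≤ ∑' x, ‖npi x‖ₑ * ∑' z, ‖LCtrunc S0 S1 n q x z - q x z‖ₑ *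
          ∑' y, ‖d z y‖ₑ * ENNReal.ofReal (g y) :=
        tsum_enorm_mul_le_of_hasSum (b := fun x z => LCtrunc S0 S1 n q x z - q x z) hμ _
    _ ≤ ∑' x, ‖npi x‖ₑ * ∑' z, ‖LCtrunc S0 S1 n q x z - q x z‖ₑ * ENNReal.ofReal (u z) := by
        gcongr with x z
        exact tsum_enorm_mul_ofReal_le hg (hdg z) (hdu z)
    _ ≤ ∑' x, ENNReal.ofReal (A x) := by
        refine ENNReal.tsum_le_tsum fun x => ?_
        rcases le_or_gt x.1.1 n with hx | hx
        · rw [ENNReal.ofReal_mul (hnpi x), Real.enorm_eq_ofReal (hnpi x)]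
          gcongr
          exact tsum_enorm_LCtrunc_sub_mul_le hn hq hx hu (hqu x hx)
        · rw [hvanish x hx, enorm_zero, zero_mul]
          exact zero_le
    _ = ENNReal.ofReal (∑' x, A x) := (ENNReal.ofReal_tsum_of_nonneg A_nonneg
        (summable_of_eq_zero_of_lt_level A_eq_zero)).symm

lemma Efun_eq_tsum_exitRate (hn : 1 ≤ n) (hvanish : ∀ x, n < x.1.1 → npi x = 0)
    (v : BState S0 S1 → ℝ) (C : ℝ) :
    Efun S0 S1 n q npi v C =
      2 * ∑' x, npi x * ∑' w, exitRate n q x w * ((v w + C) + (v (levelProj n w) + C)) := by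
  refine congrArg (2 * ·) (tsum_congr fun x => ?_)
  split_ifs with hx
  · refine congrArg (npi x * ·) (tsum_congr fun w => ?_)
    rw [← exitRate_mul]
    linear_combination exitRate_mul_vAt (q := q) (x := x) hn v w
  · rw [hvanish x (not_le.1 hx), zero_mul]

theorem stmt3_general {pi v : BState S0 S1 → ℝ} {C K : ℝ} (hn : 1 ≤ n) (hq : IsQMatrix q)
    (hnpi : ∀ x, 0 ≤ npi x) (hvanish : ∀ x, n < x.1.1 → npi x = 0) (hg : ∀ y, 0 ≤ g y)
    (hdg : ∀ z, Summable fun y => |d z y| * g y)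
    (hdv : ∀ z, ∑' y, |d z y| * g y ≤ K * (v z + C))
    (hqv : ∀ x : BState S0 S1, x.1.1 ≤ n →
      Summable fun w : BState S0 S1 => if n < w.1.1 then q x w * v w else 0)
    (hdev : ∀ y, HasSum (fun p : BState S0 S1 × BState S0 S1 =>
      npi p.1 * (LCtrunc S0 S1 n q p.1 p.2 - q p.1 p.2) * d p.2 y) (npi y - pi y)) :
    (Summable fun y => |pi y - npi y| * g y) ∧
      ∑' y, |pi y - npi y| * g y ≤ K / 2 * Efun S0 S1 n q npi v C := by
  have hqu (x : BState S0 S1) (hx : x.1.1 ≤ n) :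
      Summable fun w => exitRate n q x w * (K * (v w + C)) := by
    have summable_exit_v : Summable fun w => exitRate n q x w * v w := by
      simpa only [exitRate_mul] using hqv x hx
    refine ((summable_exit_v.add ((summable_exitRate hq n x).mul_right C)).mul_left K).congr
      fun w => ?_
    ring
  have bound_eq : K / 2 * Efun S0 S1 n q npi v C = ∑' x, npi x *
      ∑' w, exitRate n q x w * (K * (v w + C) + K * (v (levelProj n w) + C)) := by
    rw [Efun_eq_tsum_exitRate hn hvanish]
    simp only [← mul_add, mul_left_comm _ K, tsum_mul_left]
    ring
  simp only [abs_sub_comm (pi _), bound_eq]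
  exact tsum_abs_mul_le_of_hasSum_LCtrunc_sub hn hq hnpi hvanish hdev hg hdg hdv hqu

end Truncation

/-- Bound (2.18) of the paper's Theorem 2.1. -/
theorem stmt3 (S0 S1 : ℕ) (n : ℕ) (hn : 1 ≤ n)
    (q d : BState S0 S1 → BState S0 S1 → ℝ) (hq : IsQMatrix q)
    (pi npi : BState S0 S1 → ℝ)
    (hpi0 : ∀ x, 0 ≤ pi x) (hpi1 : (∑' x, pi x) = 1)
    (hnpi0 : ∀ x, 0 ≤ npi x) (hnpi1 : (∑' x, npi x) = 1)
    (hvanish : ∀ x : BState S0 S1, n < x.1.1 → npi x = 0)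
    (f : BState S0 S1 → ℝ) (hf : ∀ x, 1 ≤ f x)
    (hpif : Summable (fun x => pi x * f x))
    (v : BState S0 S1 → ℝ) (hv : ∀ x, 0 ≤ v x)
    (C : ℝ) (hC : 0 ≤ C)
    (ha1 : ∀ x, Summable (fun y => |d x y| * f y))
    (ha2 : ∀ g : BState S0 S1 → ℝ, (∀ y, 0 ≤ g y ∧ g y ≤ f y) → ∀ x,
      (∑' y, |d x y| * g y) ≤ ((∑' z, pi z * g z) + 1) * (v x + C))
    (hb : ∀ x : BState S0 S1, x.1.1 ≤ n →
      Summable (fun y : BState S0 S1 => if n < y.1.1 then q x y * v y else 0))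
    (hc : ∀ y : BState S0 S1,
      Summable (fun p : BState S0 S1 × BState S0 S1 =>
        |npi p.1 * (LCtrunc S0 S1 n q p.1 p.2 - q p.1 p.2) * d p.2 y|) ∧
      npi y - pi y =
        ∑' x : BState S0 S1, ∑' z : BState S0 S1,
          npi x * (LCtrunc S0 S1 n q x z - q x z) * d z y)
    (g : BState S0 S1 → ℝ) (hg : ∀ y, 0 ≤ g y ∧ g y ≤ f y) :
    (∑' y, |pi y - npi y| * g y) ≤
      ((∑' z, pi z * g z) + 1) / 2 * Efun S0 S1 n q npi v C :=
  (stmt3_general hn hq hnpi0 hvanish (fun y => (hg y).1)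
    (fun z => (ha1 z).of_nonneg_of_le (fun y => mul_nonneg (abs_nonneg _) (hg y).1)
      fun y => mul_le_mul_of_nonneg_left (hg y).2 (abs_nonneg _))
    (ha2 g hg) hb
    fun y => (hc y).1.of_abs.hasSum_iff.2 ((hc y).1.of_abs.tsum_prod.trans (hc y).2.symm)).2
end

section
/- Let Q be a q-matrix on F with the given block structure satisfying the f-modulated drift condition with data (b, K, v, f). Let π : F → [0,∞) satisfy Σ_{x∈F} π(x) = 1, Σ_{x∈F} π(x) q(x;y) = 0 for every y ∈ F (the series converging absolutely), and Σ_{x∈F} Σ_{y∈F} π(x) |q(x;y)| v(y) < ∞. Then Σ_{x∈F} π(x) f(x) ≤ b. -/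
/-- The `f`-modulated drift condition with data `(b, K, v, f)`:
`Q v ≤ -f + b 1_{F_K}`, each row series `Σ_y q(x;y) v(y)` converging. -/
def DriftCond (S0 S1 : ℕ) (q : BState S0 S1 → BState S0 S1 → ℝ)
    (b : ℝ) (K : ℕ) (v f : BState S0 S1 → ℝ) : Prop :=
  0 < b ∧ (∀ x, 0 ≤ v x) ∧ (∀ x, 1 ≤ f x) ∧
    ∀ x : BState S0 S1, Summable (fun y => q x y * v y) ∧
      (∑' y, q x y * v y) ≤ - f x + b * (if x.1.1 ≤ K then 1 else 0)

theorem hasSum_mul_tsum_mul {α β 𝕜 : Type*} [NormedDivisionRing 𝕜] [CompleteSpace 𝕜]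
    {π : α → 𝕜} {q : α → β → 𝕜} {v μ : β → 𝕜}
    (hμ : ∀ y, HasSum (fun x => π x * q x y) (μ y))
    (hsum : Summable fun p : α × β => π p.1 * q p.1 p.2 * v p.2) :
    HasSum (fun x => π x * ∑' y, q x y * v y) (∑' y, μ y * v y) := by
  have hrows : Summable fun x => π x * ∑' y, q x y * v y := by
    simpa only [mul_assoc, tsum_mul_left] using hsum.prod
  convert hrows.hasSum using 1
  calc ∑' y, μ y * v y
      = ∑' y, ∑' x, π x * q x y * v y := by simp_rw [tsum_mul_right, (hμ _).tsum_eq]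
    _ = ∑' x, ∑' y, π x * q x y * v y := Summable.tsum_comm hsum
    _ = ∑' x, π x * ∑' y, q x y * v y := by simp_rw [mul_assoc, tsum_mul_left]

theorem summable_and_tsum_mul_le_of_drift {α : Type*} {q : α → α → ℝ} {v f g π : α → ℝ}
    (hπ : ∀ x, 0 ≤ π x) (hf : ∀ x, 0 ≤ f x)
    (hdrift : ∀ x, ∑' y, q x y * v y ≤ -f x + g x)
    (hstat : ∀ y, HasSum (fun x => π x * q x y) 0)
    (hsum : Summable fun p : α × α => π p.1 * q p.1 p.2 * v p.2)
    (hg : Summable fun x => π x * g x) :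
    Summable (fun x => π x * f x) ∧ ∑' x, π x * f x ≤ ∑' x, π x * g x := by
  have hπQv : HasSum (fun x => π x * ∑' y, q x y * v y) 0 := by
    simpa only [zero_mul, tsum_zero] using hasSum_mul_tsum_mul hstat hsum
  have hbound : HasSum (fun x => π x * g x - π x * ∑' y, q x y * v y) (∑' x, π x * g x) := by
    simpa only [sub_zero] using hg.hasSum.sub hπQv
  have hle (x : α) : π x * f x ≤ π x * g x - π x * ∑' y, q x y * v y := by
    rw [← mul_sub]
    exact mul_le_mul_of_nonneg_left (by linarith [hdrift x]) (hπ x)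
  have hπf : Summable fun x => π x * f x :=
    hbound.summable.of_nonneg_of_le (fun x => mul_nonneg (hπ x) (hf x)) hle
  exact ⟨hπf, hasSum_le hle hπf.hasSum hbound⟩

theorem stmt5_general {α : Type*} {q : α → α → ℝ} {b : ℝ} {v f π : α → ℝ}
    (hv : ∀ x, 0 ≤ v x) (hf : ∀ x, 0 ≤ f x)
    (hdrift : ∀ x, ∑' y, q x y * v y ≤ -f x + b)
    (hπ : ∀ x, 0 ≤ π x) (hmass : ∑' x, π x = 1)
    (hstat : ∀ y, Summable (fun x => |π x * q x y|) ∧ ∑' x, π x * q x y = 0)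
    (hfin : Summable fun p : α × α => π p.1 * |q p.1 p.2| * v p.2) :
    Summable (fun x => π x * f x) ∧ ∑' x, π x * f x ≤ b := by
  have hπ_summable : Summable π := not_imp_comm.1 tsum_eq_zero_of_not_summable (by simp [hmass])
  have hπqv : Summable fun p : α × α => π p.1 * q p.1 p.2 * v p.2 :=
    .of_abs <| by simpa only [abs_mul, abs_of_nonneg (hπ _), abs_of_nonneg (hv _)]
  have hπQ (y : α) : HasSum (fun x => π x * q x y) 0 :=
    (hstat y).2 ▸ (hstat y).1.of_abs.hasSum
  simpa only [tsum_mul_right, hmass, one_mul] using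
    summable_and_tsum_mul_le_of_drift hπ hf hdrift hπQ hπqv (hπ_summable.mul_right b)

theorem DriftCond.tsum_mul_le_neg_add {S0 S1 K : ℕ} {q : BState S0 S1 → BState S0 S1 → ℝ} {b : ℝ}
    {v f : BState S0 S1 → ℝ} (h : DriftCond S0 S1 q b K v f) (x : BState S0 S1) :
    ∑' y, q x y * v y ≤ -f x + b := by
  obtain ⟨hb, -, -, hdrift⟩ := h
  refine (hdrift x).2.trans (add_le_add_right (mul_le_of_le_one_right hb.le ?_) _)
  split_ifs <;> norm_num

/-- First inequality of the paper's Lemma 2.4: a stationary distribution vector of a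
q-matrix satisfying the `f`-modulated drift condition has `π f ≤ b`. -/
theorem stmt5 (S0 S1 : ℕ) (q : BState S0 S1 → BState S0 S1 → ℝ)
    (b : ℝ) (K : ℕ) (v f : BState S0 S1 → ℝ)
    (hq : IsQMatrix q) (hdrift : DriftCond S0 S1 q b K v f)
    (pi : BState S0 S1 → ℝ)
    (hpi0 : ∀ x, 0 ≤ pi x) (hpi1 : (∑' x, pi x) = 1)
    (hstat : ∀ y, Summable (fun x => |pi x * q x y|) ∧ (∑' x, pi x * q x y) = 0)
    (hfin : Summable (fun p : BState S0 S1 × BState S0 S1 =>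
      pi p.1 * |q p.1 p.2| * v p.2)) :
    Summable (fun x => pi x * f x) ∧ (∑' x, pi x * f x) ≤ b :=
  stmt5_general hdrift.2.1 (fun x => zero_le_one.trans (hdrift.2.2.1 x))
    hdrift.tsum_mul_le_neg_add hpi0 hpi1 hstat hfin
end

section
/- Let Q be a q-matrix on F with the given block structure, fix n ≥ 1, and let ₙπ : F → [0,∞) be a probability vector vanishing outside F_n. Let V, T : [0,∞) → [1,∞) be nondecreasing functions satisfying V(x+y) ≤ V(x)V(y) and T(x+y) ≤ T(x)T(y) for all x, y ≥ 0, let a : {0,…,S₁} → (0,∞) with ā := min_j a(j), and let v : F → [0,∞) satisfy v(k,j) = V(k)·a(j) for all k ≥ 1 and 0 ≤ j ≤ S₁. Let f^♯ : F → [1,∞), b^♯ > 0, C ≥ 0, and r₀, r₁ > 0 satisfy: T(k)V(k) ≤ r₀·f^♯(k,i) for every (k,i) ∈ F; for all k, ℓ ∈ ℕ₀ and every i, T(ℓ)·Σ_{m=ℓ+1}^∞ Σ_j q(k,i;k+m,j) V(m) a(j) ≤ r₁ (the series converging); and Σ_{(k,i)∈F} ₙπ(k,i) f^♯(k,i) ≤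 b^♯. Then E⁺(n) ≤ (4 r₀ r₁ b^♯ / T(n)) · (1 + (C/ā)/V(n+1)), where E⁺(n) := 4 Σ_{(k,i)∈F_n} ₙπ(k,i) Σ_{(m,j)∈F̄_n} q(k,i;m,j) (v(m,j) + C). -/
/-- The error decay function
`E⁺(n) = 4 Σ_{(k,i)∈F_n} ₙπ(k,i) Σ_{(m,j)∈F̄_n} q(k,i;m,j) (v(m,j) + C)`. -/
noncomputable def Eplus (S0 S1 n : ℕ) (q : BState S0 S1 → BState S0 S1 → ℝ)
    (npi v : BState S0 S1 → ℝ) (C : ℝ) : ℝ :=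
  4 * ∑' x : BState S0 S1,
    (if x.1.1 ≤ n then
      npi x * ∑' y : BState S0 S1, (if n < y.1.1 then q x y * (v y + C) else 0)
     else 0)

theorem add_le_mul_one_add_div {K : Type*} [Field K] [LinearOrder K] [IsStrictOrderedRing K]
    {s t c : K} (hs : 0 < s) (hst : s ≤ t) (hc : 0 ≤ c) : t + c ≤ t * (1 + c / s) :=
  calc t + c = t + s * (c / s) := by rw [mul_div_cancel₀ c hs.ne']
    _ ≤ t + t * (c / s) := by gcongr
    _ = t * (1 + c / s) := by ring

theorem tsum_ite_le_tsum {α : Type*} {p : α → Prop} [DecidablePred p] {u g : α → ℝ}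
    (hu : ∀ x, p x → 0 ≤ u x) (hug : ∀ x, p x → u x ≤ g x) (hg0 : ∀ x, ¬ p x → 0 ≤ g x)
    (hg : Summable g) : ∑' x, (if p x then u x else 0) ≤ ∑' x, g x := by
  have hle (x : α) : (if p x then u x else 0) ≤ g x := by
    split_ifs with hx
    exacts [hug x hx, hg0 x hx]
  have hnonneg (x : α) : 0 ≤ if p x then u x else 0 := by
    split_ifs with hx
    exacts [hu x hx, le_rfl]
  exact (hg.of_nonneg_of_le hnonneg hle).tsum_le_tsum hle hg

/-- Positive submultiplicative weights on the levels: the restrictions to `ℕ` of the functions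
`V` and `T` of the paper. -/
structure IsSubmulWeight (V : ℕ → ℝ) : Prop where
  pos : ∀ k, 0 < V k
  map_add_le_mul : ∀ k l, V (k + l) ≤ V k * V l

namespace IsSubmulWeight

theorem comp_natCast {V : ℝ → ℝ} (hpos : ∀ x, 0 ≤ x → 0 < V x)
    (hsub : ∀ x y, 0 ≤ x → 0 ≤ y → V (x + y) ≤ V x * V y) :
    IsSubmulWeight fun k : ℕ => V k where
  pos k := hpos k k.cast_nonneg
  map_add_le_mul k l := by
    simpa only [Nat.cast_add] using hsub k l k.cast_nonneg l.cast_nonneg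

variable {V : ℕ → ℝ} {k n : ℕ}

theorem le_mul_sub (hV : IsSubmulWeight V) (hkn : k ≤ n) : V n ≤ V k * V (n - k) := by
  simpa only [Nat.add_sub_cancel' hkn] using hV.map_add_le_mul k (n - k)

theorem mul_le_mul_of_sub_mul_le {s r : ℝ} (hV : IsSubmulWeight V) (hkn : k ≤ n) (hs : 0 ≤ s)
    (hr : V (n - k) * s ≤ r) : V n * s ≤ V k * r :=
  calc V n * s ≤ V k * V (n - k) * s := mul_le_mul_of_nonneg_right (hV.le_mul_sub hkn) hs
    _ = V k * (V (n - k) * s) := mul_assoc _ _ _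
    _ ≤ V k * r := mul_le_mul_of_nonneg_left hr (hV.pos k).le

theorem mul_add_const_le (hV : IsSubmulWeight V) (hmono : Monotone V) {m : ℕ} (hkn : k ≤ n)
    (hnm : n < m) {a abar C : ℝ} (habar : 0 < abar) (ha : abar ≤ a) (hC : 0 ≤ C) :
    V m * a + C ≤ (1 + C / abar / V (n + 1)) * V k * (V (m - k) * a) := by
  have hVn : 0 < V (n + 1) := hV.pos _
  have hVm : V (n + 1) * abar ≤ V m * a :=
    mul_le_mul (hmono hnm) ha habar.le (hV.pos m).le
  have hsplit : V m ≤ V k * V (m - k) := hV.le_mul_sub (hkn.trans hnm.le)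
  have ha0 : 0 ≤ a := habar.le.trans ha
  calc V m * a + C
      ≤ V m * a * (1 + C / (V (n + 1) * abar)) :=
        add_le_mul_one_add_div (mul_pos hVn habar) hVm hC
    _ = V m * a * (1 + C / abar / V (n + 1)) := by rw [mul_comm (V (n + 1)), div_div]
    _ ≤ V k * V (m - k) * a * (1 + C / abar / V (n + 1)) := by gcongr
    _ = (1 + C / abar / V (n + 1)) * V k * (V (m - k) * a) := by ring

end IsSubmulWeight

section Levels

variable {α : Type*} {level : α → ℕ} {n : ℕ}

/-- The sum of `u` over the states strictly above level `n`, i.e. over `F̄_n`. The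
conditional summand is that of `Eplus`, which makes `Eplus_eq_errorDecay` definitional. -/
noncomputable def upperSum (level : α → ℕ) (n : ℕ) (u : α → ℝ) : ℝ :=
  ∑' y, if n < level y then u y else 0

/-- The error decay function `E⁺(n)` on an arbitrary state space `α` graded by `level`; `g` plays
the role of `v + C`. -/
noncomputable def errorDecay (level : α → ℕ) (n : ℕ) (q : α → α → ℝ) (π g : α → ℝ) : ℝ :=
  4 * ∑' x, if level x ≤ n then π x * upperSum level n (fun y => q x y * g y) else 0

theorem upperSum_nonneg {u : α → ℝ} (hu : ∀ y, n < level y → 0 ≤ u y) :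
    0 ≤ upperSum level n u :=
  tsum_nonneg fun y => by
    split_ifs with hy
    exacts [hu y hy, le_rfl]

theorem upperSum_le_mul_upperSum {u g : α → ℝ} {c : ℝ} (hu : ∀ y, n < level y → 0 ≤ u y)
    (hug : ∀ y, n < level y → u y ≤ c * g y)
    (hg : Summable fun y => if n < level y then g y else 0) :
    upperSum level n u ≤ c * upperSum level n g := by
  unfold upperSum
  rw [← tsum_mul_left]
  refine tsum_ite_le_tsum hu (fun y hy => ?_) (fun y hy => ?_) (hg.mul_left c)
  · simpa only [if_pos hy] using hug y hy
  · simp only [if_neg hy, mul_zero, le_refl]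

variable {q : α → α → ℝ} {V T : ℕ → ℝ} {w v : α → ℝ} {abar C r₁ : ℝ}

theorem upperSum_mul_add_le_mul_upperSum (hq : ∀ x y, level x < level y → 0 ≤ q x y)
    (hV : IsSubmulWeight V) (hVmono : Monotone V)
    (habar : 0 < abar) (hw : ∀ y, 0 < level y → abar ≤ w y)
    (hv0 : ∀ y, 0 ≤ v y) (hv : ∀ y, 0 < level y → v y ≤ V (level y) * w y) (hC : 0 ≤ C)
    {x : α} (hx : level x ≤ n)
    (hsum : Summable fun y => if n < level y then q x y * V (level y - level x) * w y else 0) :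
    upperSum level n (fun y => q x y * (v y + C)) ≤
      (1 + C / abar / V (n + 1)) * V (level x) *
        upperSum level n fun y => q x y * V (level y - level x) * w y := by
  have hqx (y : α) (hy : n < level y) : 0 ≤ q x y := hq x y (hx.trans_lt hy)
  refine upperSum_le_mul_upperSum
    (fun y hy => mul_nonneg (hqx y hy) (add_nonneg (hv0 y) hC)) (fun y hy => ?_) hsum
  have hy0 : 0 < level y := n.zero_le.trans_lt hy
  calc q x y * (v y + C) ≤ q x y * (V (level y) * w y + C) :=
        mul_le_mul_of_nonneg_left (add_le_add_left (hv y hy0) C) (hqx y hy)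
    _ ≤ q x y * ((1 + C / abar / V (n + 1)) * V (level x) * (V (level y - level x) * w y)) :=
        mul_le_mul_of_nonneg_left (hV.mul_add_const_le hVmono hx hy habar (hw y hy0) hC)
          (hqx y hy)
    _ = (1 + C / abar / V (n + 1)) * V (level x) *
          (q x y * V (level y - level x) * w y) := by ring

theorem upperSum_mul_add_le (hq : ∀ x y, level x < level y → 0 ≤ q x y)
    (hV : IsSubmulWeight V) (hVmono : Monotone V) (hT : IsSubmulWeight T)
    (habar : 0 < abar) (hw : ∀ y, 0 < level y → abar ≤ w y)
    (hv0 : ∀ y, 0 ≤ v y) (hv : ∀ y, 0 < level y → v y ≤ V (level y) * w y) (hC : 0 ≤ C)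
    {x : α} (hx : level x ≤ n)
    (hsum : Summable fun y => if n < level y then q x y * V (level y - level x) * w y else 0)
    (htail : T (n - level x) *
      upperSum level n (fun y => q x y * V (level y - level x) * w y) ≤ r₁) :
    upperSum level n (fun y => q x y * (v y + C)) ≤
      (1 + C / abar / V (n + 1)) * r₁ / T n * (T (level x) * V (level x)) := by
  set D := 1 + C / abar / V (n + 1)
  set S := upperSum level n fun y => q x y * V (level y - level x) * w y
  have hVn : 0 < V (n + 1) := hV.pos _
  have hVx : 0 < V (level x) := hV.pos _
  have hTn : 0 < T n := hT.pos n
  have hS : 0 ≤ S := upperSum_nonneg fun y hy =>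
    mul_nonneg (mul_nonneg (hq x y (hx.trans_lt hy)) (hV.pos _).le)
      (habar.le.trans (hw y (n.zero_le.trans_lt hy)))
  have hTS : T n * S ≤ T (level x) * r₁ := hT.mul_le_mul_of_sub_mul_le hx hS htail
  calc upperSum level n (fun y => q x y * (v y + C))
      ≤ D * V (level x) * S :=
        upperSum_mul_add_le_mul_upperSum hq hV hVmono habar hw hv0 hv hC hx hsum
    _ = D * V (level x) * (T n * S) / T n := by field_simp
    _ ≤ D * V (level x) * (T (level x) * r₁) / T n := by gcongr
    _ = D * r₁ / T n * (T (level x) * V (level x)) := by ring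

theorem errorDecay_le_of_upperSum_le {π f g : α → ℝ} {c b : ℝ} (hπ : ∀ x, 0 ≤ π x)
    (hf : ∀ x, 0 ≤ f x) (hc : 0 ≤ c)
    (hg0 : ∀ x, level x ≤ n → 0 ≤ upperSum level n (fun y => q x y * g y))
    (hg : ∀ x, level x ≤ n → upperSum level n (fun y => q x y * g y) ≤ c * f x)
    (hsum : Summable fun x => π x * f x) (hb : ∑' x, π x * f x ≤ b) :
    errorDecay level n q π g ≤ 4 * (c * b) := by
  refine mul_le_mul_of_nonneg_left ?_ zero_le_four
  calc ∑' x, (if level x ≤ n then π x * upperSum level n (fun y => q x y * g y) else 0)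
      ≤ ∑' x, c * (π x * f x) :=
        tsum_ite_le_tsum (fun x hx => mul_nonneg (hπ x) (hg0 x hx))
          (fun x hx => (mul_le_mul_of_nonneg_left (hg x hx) (hπ x)).trans_eq
            (mul_left_comm _ _ _))
          (fun x _ => mul_nonneg hc (mul_nonneg (hπ x) (hf x))) (hsum.mul_left c)
    _ = c * ∑' x, π x * f x := tsum_mul_left
    _ ≤ c * b := mul_le_mul_of_nonneg_left hb hc

theorem stmt10_general (hq : ∀ x y, level x < level y → 0 ≤ q x y)
    (hV : IsSubmulWeight V) (hVmono : Monotone V) (hT : IsSubmulWeight T)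
    (habar : 0 < abar) (hw : ∀ y, 0 < level y → abar ≤ w y)
    (hv0 : ∀ y, 0 ≤ v y) (hv : ∀ y, 0 < level y → v y ≤ V (level y) * w y) (hC : 0 ≤ C)
    {π f : α → ℝ} {r₀ b : ℝ} (hπ : ∀ x, 0 ≤ π x)
    (hr₀ : 0 ≤ r₀) (hr₁ : 0 ≤ r₁) (hTV : ∀ x, T (level x) * V (level x) ≤ r₀ * f x)
    (htail : ∀ (x : α) (l : ℕ),
      Summable (fun y => if level x + l < level y
        then q x y * V (level y - level x) * w y else 0) ∧
      T l * upperSum level (level x + l) (fun y => q x y * V (level y - level x) * w y) ≤ r₁)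
    (hsum : Summable fun x => π x * f x) (hb : ∑' x, π x * f x ≤ b) :
    errorDecay level n q π (fun y => v y + C) ≤
      4 * r₀ * r₁ * b / T n * (1 + C / abar / V (n + 1)) := by
  set D := 1 + C / abar / V (n + 1)
  have hVn : 0 < V (n + 1) := hV.pos _
  have hTn : 0 < T n := hT.pos n
  have hf (x : α) : 0 ≤ f x :=
    (pos_of_mul_pos_right ((mul_pos (hT.pos _) (hV.pos _)).trans_le (hTV x)) hr₀).le
  have hinner0 (x : α) (hx : level x ≤ n) :
      0 ≤ upperSum level n fun y => q x y * (v y + C) :=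
    upperSum_nonneg fun y hy => mul_nonneg (hq x y (hx.trans_lt hy)) (add_nonneg (hv0 y) hC)
  have hinner (x : α) (hx : level x ≤ n) :
      upperSum level n (fun y => q x y * (v y + C)) ≤ D * r₁ / T n * r₀ * f x := by
    obtain ⟨hs, hle⟩ := htail x (n - level x)
    rw [Nat.add_sub_cancel' hx] at hs hle
    calc upperSum level n (fun y => q x y * (v y + C))
        ≤ D * r₁ / T n * (T (level x) * V (level x)) :=
          upperSum_mul_add_le hq hV hVmono hT habar hw hv0 hv hC hx hs hle
      _ ≤ D * r₁ / T n * (r₀ * f x) := mul_le_mul_of_nonneg_left (hTV x) (by positivity)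
      _ = D * r₁ / T n * r₀ * f x := (mul_assoc _ _ _).symm
  calc errorDecay level n q π (fun y => v y + C) ≤ 4 * (D * r₁ / T n * r₀ * b) :=
        errorDecay_le_of_upperSum_le hπ hf (by positivity) hinner0 hinner hsum hb
    _ = 4 * r₀ * r₁ * b / T n * D := by ring

end Levels

theorem BState.snd_le_of_pos_s10 {S0 S1 : ℕ} (y : BState S0 S1) (hy : 0 < y.1.1) : y.1.2 ≤ S1 := by
  simpa only [if_neg hy.ne'] using y.2

theorem IsQMatrix.nonneg_of_lt {α β : Type*} [Preorder β] {q : α → α → ℝ} (hq : IsQMatrix q)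
    (level : α → β) {x y : α} (hxy : level x < level y) : 0 ≤ q x y :=
  hq.1 x y fun h => hxy.ne (congrArg level h)

theorem Eplus_eq_errorDecay (S0 S1 n : ℕ) (q : BState S0 S1 → BState S0 S1 → ℝ)
    (npi v : BState S0 S1 → ℝ) (C : ℝ) :
    Eplus S0 S1 n q npi v C =
      errorDecay (fun x => x.1.1) n q npi fun y => v y + C :=
  rfl

/-- Bound (2.40) of the paper's Theorem 2.4:
`E⁺(n) ≤ (4 r₀ r₁ b♯ / T(n)) (1 + (C/ā)/V(n+1))`. -/
theorem stmt10 (S0 S1 : ℕ) (n : ℕ) (hn : 1 ≤ n)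
    (q : BState S0 S1 → BState S0 S1 → ℝ) (hq : IsQMatrix q)
    (npi : BState S0 S1 → ℝ) (hnpi0 : ∀ x, 0 ≤ npi x) (hnpi1 : (∑' x, npi x) = 1)
    (hvanish : ∀ x : BState S0 S1, n < x.1.1 → npi x = 0)
    (V T : ℝ → ℝ)
    (hV1 : ∀ x : ℝ, 0 ≤ x → 1 ≤ V x) (hT1 : ∀ x : ℝ, 0 ≤ x → 1 ≤ T x)
    (hVmono : ∀ x y : ℝ, 0 ≤ x → x ≤ y → V x ≤ V y)
    (hTmono : ∀ x y : ℝ, 0 ≤ x → x ≤ y → T x ≤ T y)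
    (hVsub : ∀ x y : ℝ, 0 ≤ x → 0 ≤ y → V (x + y) ≤ V x * V y)
    (hTsub : ∀ x y : ℝ, 0 ≤ x → 0 ≤ y → T (x + y) ≤ T x * T y)
    (a : ℕ → ℝ) (ha : ∀ j, j ≤ S1 → 0 < a j)
    (abar : ℝ) (habar1 : ∀ j, j ≤ S1 → abar ≤ a j)
    (habar2 : ∃ j, j ≤ S1 ∧ a j = abar)
    (v : BState S0 S1 → ℝ) (hv0 : ∀ x, 0 ≤ v x)
    (hva : ∀ x : BState S0 S1, 1 ≤ x.1.1 → v x = V x.1.1 * a x.1.2)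
    (fs : BState S0 S1 → ℝ) (hfs : ∀ x, 1 ≤ fs x)
    (bs : ℝ) (hbs : 0 < bs) (C : ℝ) (hC : 0 ≤ C)
    (r0 r1 : ℝ) (hr0pos : 0 < r0) (hr1pos : 0 < r1)
    (hr0 : ∀ x : BState S0 S1, T x.1.1 * V x.1.1 ≤ r0 * fs x)
    (hr1 : ∀ (x : BState S0 S1) (l : ℕ),
      Summable (fun y : BState S0 S1 =>
        if x.1.1 + l < y.1.1 then q x y * V ((y.1.1 - x.1.1 : ℕ) : ℝ) * a y.1.2
        else 0) ∧
      T l * (∑' y : BState S0 S1,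
        if x.1.1 + l < y.1.1 then q x y * V ((y.1.1 - x.1.1 : ℕ) : ℝ) * a y.1.2
        else 0) ≤ r1)
    (hnpifs : Summable (fun x => npi x * fs x) ∧ (∑' x, npi x * fs x) ≤ bs) :
    Eplus S0 S1 n q npi v C ≤
      4 * r0 * r1 * bs / T n * (1 + C / abar / V ((n : ℝ) + 1)) := by
  obtain ⟨j, hj, rfl⟩ := habar2
  rw [Eplus_eq_errorDecay, ← Nat.cast_succ]
  exact stmt10_general (level := fun x : BState S0 S1 => x.1.1) (w := fun y => a y.1.2)
    (fun _ _ => hq.nonneg_of_lt fun x => x.1.1)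
    (IsSubmulWeight.comp_natCast (fun x hx => one_pos.trans_le (hV1 x hx)) hVsub)
    (fun k l hkl => hVmono k l k.cast_nonneg (Nat.cast_le.2 hkl))
    (IsSubmulWeight.comp_natCast (fun x hx => one_pos.trans_le (hT1 x hx)) hTsub)
    (ha j hj) (fun y hy => habar1 _ (y.snd_le_of_pos_s10 hy)) hv0 (fun y hy => (hva y hy).le) hC
    hnpi0 hr0pos.le hr1pos.le hr0 hr1 hnpifs.1 hnpifs.2
end

section
/- Let F be a countable set, π and π_n probability vectors on F, v : F → (0,∞), f : F → [1,∞), and suppose C̄ := sup_{x∈F} f(x)/v(x) < ∞. Define π̂(x) := π(x)(f(x)/v(x)) / Σ_{z∈F} π(z)(f(z)/v(z)) and π̂_n(x) := π_n(x)(f(x)/v(x)) / Σ_{z∈F} π_n(z)(f(z)/v(z)). Suppose Ê ≥ 0 is such that for every ĝ : F → ℝ with 0 < ĝ(x) ≤ v(x) for all x and Σ_x π̂(x) ĝ(x) < ∞, one has Σ_x |π̂(x) − π̂_n(x)| ĝ(x) ≤ Ê · Σ_x π̂(x) ĝ(x). Then Σ_{x∈F} |π(x) − π_n(x)| ≤ 2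 Ê. -/
/-!
Testing the hypothesis with `g = v / f` undoes the reweighting: `π̂ g` and `π̂_n g` are positive
multiples of `π` and `π_n`, so in `ℓ¹` the vectors `π` and `π_n` are their normalizations. The
hypothesis says `‖π̂ g - π̂_n g‖ ≤ Ê ‖π̂ g‖`, and normalizing two vectors at most doubles their
distance relative to the norm of either one.
-/

/-- The transformed probability vector `π̂(x) = π(x)(f(x)/v(x)) / Σ_z π(z)(f(z)/v(z))`. -/
noncomputable def hatP {F : Type*} (p f v : F → ℝ) (x : F) : ℝ :=
  p x * (f x / v x) / ∑' z, p z * (f z / v z)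

theorem norm_mul_norm_normalize_sub_normalize_le {E : Type*} [NormedAddCommGroup E]
    [NormedSpace ℝ E] (x y : E) :
    ‖x‖ * ‖NormedSpace.normalize x - NormedSpace.normalize y‖ ≤ 2 * ‖x - y‖ := by
  have hsplit : ‖x‖ • (NormedSpace.normalize x - NormedSpace.normalize y) =
      (x - y) + (‖y‖ - ‖x‖) • NormedSpace.normalize y := by
    rw [smul_sub, sub_smul, NormedSpace.norm_smul_normalize, NormedSpace.norm_smul_normalize]
    abel
  have hnorm : ‖NormedSpace.normalize y‖ ≤ 1 := by
    rw [NormedSpace.normalize, norm_smul, norm_inv, norm_norm]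
    exact inv_mul_le_one
  calc ‖x‖ * ‖NormedSpace.normalize x - NormedSpace.normalize y‖
      = ‖(x - y) + (‖y‖ - ‖x‖) • NormedSpace.normalize y‖ := by rw [← hsplit, norm_smul, norm_norm]
    _ ≤ ‖x - y‖ + |‖y‖ - ‖x‖| * ‖NormedSpace.normalize y‖ := by
        simpa only [norm_smul, Real.norm_eq_abs] using
          norm_add_le (x - y) ((‖y‖ - ‖x‖) • NormedSpace.normalize y)
    _ ≤ ‖x - y‖ + ‖x - y‖ * 1 := by
        gcongr
        simpa only [norm_sub_rev] using abs_norm_sub_norm_le y x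
    _ = 2 * ‖x - y‖ := by ring

section Sums

variable {ι : Type*}

theorem lp_one_norm_eq_tsum {E : ι → Type*} [∀ i, NormedAddCommGroup (E i)] (x : lp E 1) :
    ‖x‖ = ∑' i, ‖x i‖ := by
  simp only [lp.norm_eq_tsum_rpow (p := 1) (by simp), ENNReal.toReal_one, Real.rpow_one,
    div_one]

theorem mul_tsum_abs_div_sub_div_le {a b : ι → ℝ} {A B : ℝ} (ha₀ : ∀ i, 0 ≤ a i)
    (hb₀ : ∀ i, 0 ≤ b i) (ha : HasSum a A) (hb : HasSum b B) :
    A * ∑' i, |a i / A - b i / B| ≤ 2 * ∑' i, |a i - b i| := by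
  let x : lp (fun _ : ι => ℝ) 1 := ⟨a, memℓp_gen (by simpa using ha.summable.abs)⟩
  let y : lp (fun _ : ι => ℝ) 1 := ⟨b, memℓp_gen (by simpa using hb.summable.abs)⟩
  have hx : ‖x‖ = A := by
    rw [lp_one_norm_eq_tsum, ← ha.tsum_eq]
    exact tsum_congr fun i => Real.norm_of_nonneg (ha₀ i)
  have hy : ‖y‖ = B := by
    rw [lp_one_norm_eq_tsum, ← hb.tsum_eq]
    exact tsum_congr fun i => Real.norm_of_nonneg (hb₀ i)
  have hxy := norm_mul_norm_normalize_sub_normalize_le x y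
  simp only [NormedSpace.normalize, hx, hy, lp_one_norm_eq_tsum] at hxy
  simp only [div_eq_inv_mul]
  exact hxy

theorem hasSum_of_tsum_eq_of_ne_zero {M : Type*} [AddCommMonoid M] [TopologicalSpace M]
    {p : ι → M} {a : M} (h : ∑' i, p i = a) (ha : a ≠ 0) : HasSum p a := by
  have hp : Summable p := by
    by_contra hp
    exact ha (h.symm.trans (tsum_eq_zero_of_not_summable hp))
  exact h ▸ hp.hasSum

theorem summable_mul_of_nonneg_of_le_s11 {p w : ι → ℝ} {C : ℝ} (hp₀ : ∀ i, 0 ≤ p i)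
    (hp : Summable p) (hw₀ : ∀ i, 0 ≤ w i) (hwC : ∀ i, w i ≤ C) :
    Summable fun i => p i * w i :=
  .of_nonneg_of_le (fun i => mul_nonneg (hp₀ i) (hw₀ i))
    (fun i => mul_le_mul_of_nonneg_left (hwC i) (hp₀ i)) (hp.mul_right C)

theorem tsum_mul_pos_of_tsum_ne_zero {p w : ι → ℝ} (hp₀ : ∀ i, 0 ≤ p i)
    (hp : ∑' i, p i ≠ 0) (hw : ∀ i, 0 < w i) (hpw : Summable fun i => p i * w i) :
    0 < ∑' i, p i * w i := by
  obtain ⟨i, hi⟩ : ∃ i, p i ≠ 0 := by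
    by_contra! h
    simp [h] at hp
  exact hpw.tsum_pos (fun j => mul_nonneg (hp₀ j) (hw j).le) i
    (mul_pos ((hp₀ i).lt_of_ne' hi) (hw i))

end Sums

section Reweighting

variable {F : Type*} {p q f v : F → ℝ}

theorem hatP_mul_div {x : F} (hf : f x ≠ 0) (hv : v x ≠ 0) :
    hatP p f v x * (v x / f x) = p x / ∑' z, p z * (f z / v z) := by
  rw [hatP, div_mul_eq_mul_div, mul_assoc, div_mul_div_cancel₀ hv, div_self hf, mul_one]

theorem hasSum_hatP_mul_div {a : ℝ} (hf : ∀ x, f x ≠ 0) (hv : ∀ x, v x ≠ 0)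
    (hp : HasSum p a) :
    HasSum (fun x => hatP p f v x * (v x / f x)) (a / ∑' z, p z * (f z / v z)) := by
  simpa only [hatP_mul_div (hf _) (hv _)] using hp.div_const _

theorem stmt11_general {E : ℝ} (hf : ∀ x, 0 < f x) (hv : ∀ x, 0 < v x)
    (hp₀ : ∀ x, 0 ≤ p x) (hp : HasSum p 1) (hq₀ : ∀ x, 0 ≤ q x) (hq : HasSum q 1)
    (hpw : Summable fun x => p x * (f x / v x)) (hqw : Summable fun x => q x * (f x / v x))
    (hE : ∑' x, |hatP p f v x - hatP q f v x| * (v x / f x) ≤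
      E * ∑' x, hatP p f v x * (v x / f x)) :
    ∑' x, |p x - q x| ≤ 2 * E := by
  have hf₀ x : f x ≠ 0 := (hf x).ne'
  have hv₀ x : v x ≠ 0 := (hv x).ne'
  have hw x : 0 < f x / v x := div_pos (hf x) (hv x)
  have hg x : 0 ≤ v x / f x := (div_pos (hv x) (hf x)).le
  set S := ∑' x, p x * (f x / v x)
  set T := ∑' x, q x * (f x / v x)
  have hS₀ : 0 < S := tsum_mul_pos_of_tsum_ne_zero hp₀ (by simp [hp.tsum_eq]) hw hpw
  have hT₀ : 0 < T := tsum_mul_pos_of_tsum_ne_zero hq₀ (by simp [hq.tsum_eq]) hw hqw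
  have hdist : ∑' x, |p x / S - q x / T| ≤ E * (1 / S) := by
    rw [(hasSum_hatP_mul_div hf₀ hv₀ hp).tsum_eq] at hE
    refine le_of_eq_of_le (tsum_congr fun x => ?_) hE
    rw [← hatP_mul_div (hf₀ x) (hv₀ x), ← hatP_mul_div (hf₀ x) (hv₀ x), ← sub_mul, abs_mul,
      abs_of_nonneg (hg x)]
  have hnormalize := mul_tsum_abs_div_sub_div_le (fun x => div_nonneg (hp₀ x) hS₀.le)
    (fun x => div_nonneg (hq₀ x) hT₀.le) (hp.div_const S) (hq.div_const T)
  simp only [div_div_div_cancel_right₀ hS₀.ne', div_div_div_cancel_right₀ hT₀.ne', div_one]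
    at hnormalize
  refine le_of_mul_le_mul_left ?_ (one_div_pos.mpr hS₀)
  calc 1 / S * ∑' x, |p x - q x|
      ≤ 2 * ∑' x, |p x / S - q x / T| := hnormalize
    _ ≤ 2 * (E * (1 / S)) := by gcongr
    _ = 1 / S * (2 * E) := by ring

end Reweighting

/-- Total-variation bound (3.9) of the paper's Theorem 3.1. -/
theorem stmt11 {F : Type*} [Countable F] (v f : F → ℝ)
    (hv : ∀ x, 0 < v x) (hf : ∀ x, 1 ≤ f x)
    (Cbar : ℝ) (hCbar : ∀ x, f x / v x ≤ Cbar)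
    (pi pin : F → ℝ)
    (hpi0 : ∀ x, 0 ≤ pi x) (hpi1 : (∑' x, pi x) = 1)
    (hpin0 : ∀ x, 0 ≤ pin x) (hpin1 : (∑' x, pin x) = 1)
    (Ehat : ℝ) (hEhat : 0 ≤ Ehat)
    (hbound : ∀ g : F → ℝ, (∀ x, 0 < g x ∧ g x ≤ v x) →
      Summable (fun x => hatP pi f v x * g x) →
      (∑' x, |hatP pi f v x - hatP pin f v x| * g x) ≤
        Ehat * ∑' x, hatP pi f v x * g x) :
    (∑' x, |pi x - pin x|) ≤ 2 * Ehat := by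
  have hf₀ x : 0 < f x := one_pos.trans_le (hf x)
  have hpi := hasSum_of_tsum_eq_of_ne_zero hpi1 one_ne_zero
  have hpin := hasSum_of_tsum_eq_of_ne_zero hpin1 one_ne_zero
  have hw x : 0 ≤ f x / v x := (div_pos (hf₀ x) (hv x)).le
  exact stmt11_general hf₀ hv hpi0 hpi hpin0 hpin
    (summable_mul_of_nonneg_of_le_s11 hpi0 hpi.summable hw hCbar)
    (summable_mul_of_nonneg_of_le_s11 hpin0 hpin.summable hw hCbar)
    (hbound _ (fun x => ⟨div_pos (hv x) (hf₀ x), div_le_self (hv x).le (hf x)⟩)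
      (hasSum_hatP_mul_div (fun x => (hf₀ x).ne') (fun x => (hv x).ne') hpi).summable)
end

section
/- Let F be a countable set, π and π_n probability vectors on F, v : F → (0,∞), f : F → [1,∞), and suppose C̄ := sup_{x∈F} f(x)/v(x) < ∞. Define π̂(x) := π(x)(f(x)/v(x)) / Σ_{z∈F} π(z)(f(z)/v(z)) and π̂_n(x) := π_n(x)(f(x)/v(x)) / Σ_{z∈F} π_n(z)(f(z)/v(z)). Suppose Σ_x π̂(x) v(x) ≤ b̂ for some b̂ > 0, and suppose Ê ≥ 0 is such that for every ĝ : F → ℝ with 0 < ĝ(x) ≤ v(x) for all x and Σ_x π̂(x) ĝ(x) < ∞, one has Σ_x |π̂(x) − π̂_n(x)| ĝ(x) ≤ Ê · Σ_x π̂(x) ĝ(x). Then for every g : F → ℝ with 0 < g(x) ≤ f(x) for all x, Σ_x |π(x) − π_n(x)| g(x) ≤ Ê · [1 + (1 + Ê)/max(1 − min(Ê,1), 1/(b̂ C̄))] · Σ_x π(x) g(x). -/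
section RelErrorBound

variable {F : Type*} {p q v g : F → ℝ} {E : ℝ}

lemma summable_mul_of_pos_of_le (hp : ∀ x, 0 ≤ p x) (hg : ∀ x, 0 < g x ∧ g x ≤ v x)
    (hpv : Summable fun x => p x * v x) : Summable fun x => p x * g x :=
  hpv.of_nonneg_of_le (fun x => mul_nonneg (hp x) (hg x).1.le)
    (fun x => mul_le_mul_of_nonneg_left (hg x).2 (hp x))

lemma tsum_mul_le_tsum_mul_of_pos_of_le (hp : ∀ x, 0 ≤ p x) (hg : ∀ x, 0 < g x ∧ g x ≤ v x)
    (hpv : Summable fun x => p x * v x) : ∑' x, p x * g x ≤ ∑' x, p x * v x :=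
  (summable_mul_of_pos_of_le hp hg hpv).tsum_le_tsum
    (fun x => mul_le_mul_of_nonneg_left (hg x).2 (hp x)) hpv

lemma abs_sub_mul_of_nonneg {a b c : ℝ} (hc : 0 ≤ c) : |a - b| * c = |a * c - b * c| := by
  rw [← sub_mul, abs_mul, abs_of_nonneg hc]

lemma summable_mul_of_summable_abs_sub_mul (hg : ∀ x, 0 ≤ g x)
    (hpg : Summable fun x => p x * g x) (hd : Summable fun x => |p x - q x| * g x) :
    Summable fun x => q x * g x := by
  have hd' : Summable fun x => |p x * g x - q x * g x| :=
    hd.congr fun x => abs_sub_mul_of_nonneg (hg x)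
  simpa only [sub_sub_cancel] using hpg.sub hd'.of_abs

lemma abs_tsum_mul_sub_tsum_mul_le (hg : ∀ x, 0 ≤ g x)
    (hpg : Summable fun x => p x * g x) (hd : Summable fun x => |p x - q x| * g x) :
    |∑' x, p x * g x - ∑' x, q x * g x| ≤ ∑' x, |p x - q x| * g x := by
  rw [← hpg.tsum_sub (summable_mul_of_summable_abs_sub_mul hg hpg hd)]
  have hd' : Summable fun x => |p x * g x - q x * g x| :=
    hd.congr fun x => abs_sub_mul_of_nonneg (hg x)
  calc |∑' x, (p x * g x - q x * g x)|
      ≤ ∑' x, |p x * g x - q x * g x| :=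
        norm_tsum_le_tsum_norm (f := fun x => p x * g x - q x * g x) hd'
    _ = ∑' x, |p x - q x| * g x :=
        tsum_congr fun x => (abs_sub_mul_of_nonneg (hg x)).symm

/-- `E` bounds the error of `q` relative to `p` on all test functions `0 < g ≤ v` that are
integrable for `p`. If the series on the left diverges, its `tsum` is `0`, so the inequality for a
single `g` does not imply convergence. -/
def RelErrorBound (p q v : F → ℝ) (E : ℝ) : Prop :=
  ∀ g : F → ℝ, (∀ x, 0 < g x ∧ g x ≤ v x) → Summable (fun x => p x * g x) →
    (∑' x, |p x - q x| * g x) ≤ E * ∑' x, p x * g x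

/- For a finite set `A`, the function equal to `v` on `A` and to `min v 1` off `A` is a bounded test
function, so its error series converges for the summable `p` and `q`. -/
lemma RelErrorBound.sum_abs_sub_mul_le (h : RelErrorBound p q v E) (hE : 0 ≤ E)
    (hv : ∀ x, 0 < v x) (hp₀ : ∀ x, 0 ≤ p x) (hp : Summable p) (hq : Summable q)
    (hpv : Summable fun x => p x * v x) (A : Finset F) :
    ∑ x ∈ A, |p x - q x| * v x ≤ E * ∑' x, p x * v x := by
  classical
  set g : F → ℝ := fun x => if x ∈ A then v x else min (v x) 1 with hg_def
  have hg : ∀ x, 0 < g x ∧ g x ≤ v x := fun x => by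
    by_cases hx : x ∈ A <;> simp [hg_def, hx, hv x]
  have hg_bdd : ∀ x, g x ≤ 1 + ∑ y ∈ A, v y := fun x => by
    by_cases hx : x ∈ A
    · simpa [hg_def, hx] using
        (Finset.single_le_sum (fun y _ => (hv y).le) hx).trans (le_add_of_nonneg_left zero_le_one)
    · simpa [hg_def, hx] using Or.inr (Finset.sum_nonneg fun y _ => (hv y).le)
  have hpg : Summable fun x => p x * g x := summable_mul_of_pos_of_le hp₀ hg hpv
  have hd : Summable fun x => |p x - q x| * g x :=
    summable_mul_of_pos_of_le (fun _ => abs_nonneg _) (fun x => ⟨(hg x).1, hg_bdd x⟩)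
      ((hp.sub hq).abs.mul_right _)
  calc ∑ x ∈ A, |p x - q x| * v x
      = ∑ x ∈ A, |p x - q x| * g x := Finset.sum_congr rfl fun x hx => by simp [hg_def, hx]
    _ ≤ ∑' x, |p x - q x| * g x :=
        hd.sum_le_tsum _ fun x _ => mul_nonneg (abs_nonneg _) (hg x).1.le
    _ ≤ E * ∑' x, p x * g x := h g hg hpg
    _ ≤ E * ∑' x, p x * v x :=
        mul_le_mul_of_nonneg_left (tsum_mul_le_tsum_mul_of_pos_of_le hp₀ hg hpv) hE

lemma RelErrorBound.summable_abs_sub_mul (h : RelErrorBound p q v E) (hE : 0 ≤ E)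
    (hp₀ : ∀ x, 0 ≤ p x) (hp : Summable p) (hq : Summable q)
    (hpv : Summable fun x => p x * v x) (hg : ∀ x, 0 < g x ∧ g x ≤ v x) :
    Summable fun x => |p x - q x| * g x := by
  have hv : ∀ x, 0 < v x := fun x => (hg x).1.trans_le (hg x).2
  exact summable_mul_of_pos_of_le (fun _ => abs_nonneg _) hg <|
    summable_of_sum_le (fun x => mul_nonneg (abs_nonneg _) (hv x).le)
      (h.sum_abs_sub_mul_le hE hv hp₀ hp hq hpv)

end RelErrorBound

section Reweighting

variable {F : Type*} {p f v : F → ℝ} {C : ℝ}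

/-- A probability vector on `F`. Since a divergent `tsum` is `0`, the second field also forces
`p` to be summable. -/
structure IsProbVec (p : F → ℝ) : Prop where
  nonneg : ∀ x, 0 ≤ p x
  tsum_eq_one : ∑' x, p x = 1

/-- The normalizing constant `Σ_z p(z)(f(z)/v(z))` of the transformed vector `hatP p f v`. -/
noncomputable def hatZ (p f v : F → ℝ) : ℝ :=
  ∑' z, p z * (f z / v z)

lemma IsProbVec.summable (hp : IsProbVec p) : Summable p := by
  by_contra h
  exact zero_ne_one ((tsum_eq_zero_of_not_summable h).symm.trans hp.tsum_eq_one)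

lemma IsProbVec.exists_pos (hp : IsProbVec p) : ∃ x, 0 < p x := by
  by_contra! h
  have hp_zero : p = 0 := funext fun x => le_antisymm (h x) (hp.nonneg x)
  simpa [hp_zero] using hp.tsum_eq_one

lemma IsProbVec.summable_mul_div (hp : IsProbVec p) (hf : ∀ x, 0 < f x) (hv : ∀ x, 0 < v x)
    (hC : ∀ x, f x / v x ≤ C) : Summable fun x => p x * (f x / v x) :=
  summable_mul_of_pos_of_le hp.nonneg (fun x => ⟨div_pos (hf x) (hv x), hC x⟩)
    (hp.summable.mul_right C)

lemma IsProbVec.hatZ_pos (hp : IsProbVec p) (hf : ∀ x, 0 < f x) (hv : ∀ x, 0 < v x)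
    (hC : ∀ x, f x / v x ≤ C) : 0 < hatZ p f v := by
  obtain ⟨x, hx⟩ := hp.exists_pos
  exact (hp.summable_mul_div hf hv hC).tsum_pos
    (fun y => mul_nonneg (hp.nonneg y) (div_pos (hf y) (hv y)).le) x
    (mul_pos hx (div_pos (hf x) (hv x)))

lemma IsProbVec.hatZ_le (hp : IsProbVec p) (hf : ∀ x, 0 < f x) (hv : ∀ x, 0 < v x)
    (hC : ∀ x, f x / v x ≤ C) : hatZ p f v ≤ C :=
  calc hatZ p f v ≤ ∑' x, p x * C :=
        tsum_mul_le_tsum_mul_of_pos_of_le hp.nonneg (fun x => ⟨div_pos (hf x) (hv x), hC x⟩)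
          (hp.summable.mul_right C)
    _ = C := by rw [tsum_mul_right, hp.tsum_eq_one, one_mul]

lemma IsProbVec.isProbVec_hatP (hp : IsProbVec p) (hf : ∀ x, 0 < f x) (hv : ∀ x, 0 < v x)
    (hC : ∀ x, f x / v x ≤ C) : IsProbVec (hatP p f v) where
  nonneg x := div_nonneg (mul_nonneg (hp.nonneg x) (div_pos (hf x) (hv x)).le)
    (hp.hatZ_pos hf hv hC).le
  tsum_eq_one := tsum_div_const.trans (div_self (hp.hatZ_pos hf hv hC).ne')

lemma hatZ_mul_hatP_mul_div (hf : ∀ x, f x ≠ 0) (hv : ∀ x, v x ≠ 0) (hZ : hatZ p f v ≠ 0) (x : F) :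
    hatZ p f v * (hatP p f v x * (v x / f x)) = p x := by
  rw [show hatP p f v x = p x * (f x / v x) / hatZ p f v from rfl]
  field_simp [hf x, hv x]

lemma hatZ_mul_tsum_hatP_mul (hf : ∀ x, f x ≠ 0) (hv : ∀ x, v x ≠ 0) (hZ : hatZ p f v ≠ 0)
    (g : F → ℝ) :
    hatZ p f v * ∑' x, hatP p f v x * (g x * (v x / f x)) = ∑' x, p x * g x := by
  rw [← tsum_mul_left]
  refine tsum_congr fun x => ?_
  rw [← hatZ_mul_hatP_mul_div hf hv hZ x]
  ring

lemma IsProbVec.tsum_hatP_mul_div (hp : IsProbVec p) (hf : ∀ x, 0 < f x) (hv : ∀ x, 0 < v x)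
    (hC : ∀ x, f x / v x ≤ C) : ∑' x, hatP p f v x * (v x / f x) = (hatZ p f v)⁻¹ := by
  refine eq_inv_of_mul_eq_one_right ?_
  rw [← tsum_mul_left, ← hp.tsum_eq_one]
  exact tsum_congr <|
    hatZ_mul_hatP_mul_div (fun x => (hf x).ne') (fun x => (hv x).ne') (hp.hatZ_pos hf hv hC).ne'

lemma IsProbVec.one_le_mul_hatZ (hp : IsProbVec p) (hf : ∀ x, 1 ≤ f x) (hv : ∀ x, 0 < v x)
    (hC : ∀ x, f x / v x ≤ C) (hpv : Summable fun x => hatP p f v x * v x) {b : ℝ}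
    (hb : ∑' x, hatP p f v x * v x ≤ b) : 1 ≤ b * hatZ p f v := by
  have hf₀ : ∀ x, 0 < f x := fun x => zero_lt_one.trans_le (hf x)
  have hZ := hp.hatZ_pos hf₀ hv hC
  have hhat₀ := (hp.isProbVec_hatP hf₀ hv hC).nonneg
  have hvf : ∀ x, 0 < v x / f x ∧ v x / f x ≤ v x :=
    fun x => ⟨div_pos (hv x) (hf₀ x), div_le_self (hv x).le (hf x)⟩
  rw [← div_le_iff₀ hZ, one_div, ← hp.tsum_hatP_mul_div hf₀ hv hC]
  exact (tsum_mul_le_tsum_mul_of_pos_of_le hhat₀ hvf hpv).trans hb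

end Reweighting

section Comparison

lemma abs_sub_le_mul_of_abs_inv_sub_inv_le {S T E : ℝ} (hS : 0 < S) (hT : 0 < T)
    (h : |S⁻¹ - T⁻¹| ≤ E * S⁻¹) : |S - T| ≤ E * T := by
  rw [inv_sub_inv hS.ne' hT.ne', abs_div, abs_of_pos (mul_pos hS hT), abs_sub_comm,
    div_le_iff₀ (mul_pos hS hT)] at h
  calc |S - T| ≤ E * S⁻¹ * (S * T) := h
    _ = E * T := by field_simp

lemma le_div_max_of_abs_sub_le {S T E b C : ℝ} (hS : 0 < S) (hT : 0 < T) (hTC : T ≤ C)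
    (hbS : 1 ≤ b * S) (h : |S - T| ≤ E * T) :
    T ≤ S / max (1 - min E 1) (1 / (b * C)) := by
  have hC : 0 < C := hT.trans_le hTC
  have hb : 0 < b := pos_of_mul_pos_left (zero_lt_one.trans_le hbS) hS.le
  rw [le_div_comm₀ hT (lt_max_of_lt_right (by positivity))]
  refine max_le ?_ ?_
  · rw [le_div_iff₀ hT, sub_mul, one_mul, sub_le_comm, min_mul_of_nonneg _ _ hT.le, one_mul]
    exact le_min ((le_abs_self (T - S)).trans (abs_sub_comm S T ▸ h)) (sub_le_self T hS.le)
  · rw [div_le_div_iff₀ (mul_pos hb hC) hT, one_mul]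
    calc T ≤ 1 * C := by rwa [one_mul]
      _ ≤ b * S * C := mul_le_mul_of_nonneg_right hbS hC.le
      _ = S * (b * C) := by ring

lemma two_mul_div_max_le {E : ℝ} (hE : 0 ≤ E) (r : ℝ) :
    2 * E / max (1 - min E 1) r ≤ E * (1 + (1 + E) / max (1 - min E 1) r) := by
  have hm : 0 ≤ max (1 - min E 1) r := le_max_of_le_left (sub_nonneg.2 (min_le_right E 1))
  have hEm : 1 - E ≤ max (1 - min E 1) r :=
    le_max_of_le_left (sub_le_sub_left (min_le_left E 1) 1)
  generalize max (1 - min E 1) r = m at hm hEm ⊢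
  rcases hm.eq_or_lt with rfl | hm
  · simpa using hE
  · rw [div_le_iff₀ hm]
    calc 2 * E = E * (1 - E + (1 + E)) := by ring
      _ ≤ E * (m + (1 + E)) := by gcongr
      _ = E * (1 + (1 + E) / m) * m := by field_simp

end Comparison

section ReweightedError

variable {F : Type*} {v f g pi pin : F → ℝ} {C E : ℝ}

lemma IsProbVec.abs_hatZ_sub_hatZ_le (hpi : IsProbVec pi) (hpin : IsProbVec pin)
    (hf : ∀ x, 1 ≤ f x) (hv : ∀ x, 0 < v x) (hC : ∀ x, f x / v x ≤ C)
    (hpv : Summable fun x => hatP pi f v x * v x) (hE : 0 ≤ E)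
    (h : RelErrorBound (hatP pi f v) (hatP pin f v) v E) :
    |hatZ pi f v - hatZ pin f v| ≤ E * hatZ pin f v := by
  have hf₀ : ∀ x, 0 < f x := fun x => zero_lt_one.trans_le (hf x)
  have hvf : ∀ x, 0 < v x / f x ∧ v x / f x ≤ v x :=
    fun x => ⟨div_pos (hv x) (hf₀ x), div_le_self (hv x).le (hf x)⟩
  have hp := hpi.isProbVec_hatP hf₀ hv hC
  have hq := hpin.isProbVec_hatP hf₀ hv hC
  have hp_sum := summable_mul_of_pos_of_le hp.nonneg hvf hpv
  have hd_sum := h.summable_abs_sub_mul hE hp.nonneg hp.summable hq.summable hpv hvf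
  refine abs_sub_le_mul_of_abs_inv_sub_inv_le (hpi.hatZ_pos hf₀ hv hC) (hpin.hatZ_pos hf₀ hv hC) ?_
  rw [← hpi.tsum_hatP_mul_div hf₀ hv hC, ← hpin.tsum_hatP_mul_div hf₀ hv hC]
  exact (abs_tsum_mul_sub_tsum_mul_le (fun x => (hvf x).1.le) hp_sum hd_sum).trans (h _ hvf hp_sum)

lemma IsProbVec.abs_sub_mul_le (hpi : IsProbVec pi) (hpin : IsProbVec pin) (hf : ∀ x, 0 < f x)
    (hv : ∀ x, 0 < v x) (hC : ∀ x, f x / v x ≤ C) (hg : ∀ x, 0 ≤ g x) (x : F) :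
    |pi x - pin x| * g x ≤
      hatZ pin f v * (|hatP pi f v x - hatP pin f v x| * (g x * (v x / f x))) +
        |hatZ pi f v - hatZ pin f v| * (hatP pi f v x * (g x * (v x / f x))) := by
  have hS := hpi.hatZ_pos hf hv hC
  have hT := hpin.hatZ_pos hf hv hC
  have hp := (hpi.isProbVec_hatP hf hv hC).nonneg x
  have hw : 0 ≤ g x * (v x / f x) := mul_nonneg (hg x) (div_pos (hv x) (hf x)).le
  have hpi_eq := hatZ_mul_hatP_mul_div (fun x => (hf x).ne') (fun x => (hv x).ne') hS.ne' x
  have hpin_eq := hatZ_mul_hatP_mul_div (fun x => (hf x).ne') (fun x => (hv x).ne') hT.ne' x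
  set S := hatZ pi f v
  set T := hatZ pin f v
  set p := hatP pi f v x
  set q := hatP pin f v x
  calc |pi x - pin x| * g x
      = |(T * (p - q) + (S - T) * p) * (g x * (v x / f x))| := by
        rw [abs_sub_mul_of_nonneg (hg x), ← hpi_eq, ← hpin_eq]
        ring_nf
    _ = |T * (p - q) + (S - T) * p| * (g x * (v x / f x)) := by rw [abs_mul, abs_of_nonneg hw]
    _ ≤ (T * |p - q| + |S - T| * p) * (g x * (v x / f x)) := by
        refine mul_le_mul_of_nonneg_right ((abs_add_le _ _).trans_eq ?_) hw
        rw [abs_mul, abs_mul, abs_of_pos hT, abs_of_nonneg hp]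
    _ = T * (|p - q| * (g x * (v x / f x))) + |S - T| * (p * (g x * (v x / f x))) := by ring

lemma IsProbVec.tsum_abs_sub_mul_le_add (hpi : IsProbVec pi) (hpin : IsProbVec pin)
    (hf : ∀ x, 0 < f x) (hv : ∀ x, 0 < v x) (hC : ∀ x, f x / v x ≤ C) (hg : ∀ x, 0 ≤ g x)
    (hp : Summable fun x => hatP pi f v x * (g x * (v x / f x)))
    (hd : Summable fun x => |hatP pi f v x - hatP pin f v x| * (g x * (v x / f x))) :
    Summable (fun x => |pi x - pin x| * g x) ∧
      ∑' x, |pi x - pin x| * g x ≤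
        hatZ pin f v * (∑' x, |hatP pi f v x - hatP pin f v x| * (g x * (v x / f x))) +
          |hatZ pi f v - hatZ pin f v| * ∑' x, hatP pi f v x * (g x * (v x / f x)) := by
  have hle := hpi.abs_sub_mul_le hpin hf hv hC hg
  have hd' := hd.mul_left (hatZ pin f v)
  have hp' := hp.mul_left |hatZ pi f v - hatZ pin f v|
  have hsum : Summable fun x => |pi x - pin x| * g x :=
    (hd'.add hp').of_nonneg_of_le (fun x => mul_nonneg (abs_nonneg _) (hg x)) hle
  refine ⟨hsum, (hsum.tsum_le_tsum hle (hd'.add hp')).trans_eq ?_⟩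
  rw [hd'.tsum_add hp', tsum_mul_left, tsum_mul_left]

lemma mul_div_pos_and_le {a b c : ℝ} (hab : 0 < a ∧ a ≤ b) (hc : 0 < c) :
    0 < a * (c / b) ∧ a * (c / b) ≤ c := by
  have hb : 0 < b := hab.1.trans_le hab.2
  refine ⟨mul_pos hab.1 (div_pos hc hb), ?_⟩
  rw [mul_div_left_comm]
  exact mul_le_of_le_one_right hc.le ((div_le_one hb).2 hab.2)

theorem IsProbVec.tsum_abs_sub_mul_le (hpi : IsProbVec pi) (hpin : IsProbVec pin)
    (hf : ∀ x, 1 ≤ f x) (hv : ∀ x, 0 < v x) (hC : ∀ x, f x / v x ≤ C)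
    (hpv : Summable fun x => hatP pi f v x * v x) (hE : 0 ≤ E)
    (h : RelErrorBound (hatP pi f v) (hatP pin f v) v E) (hg : ∀ x, 0 < g x ∧ g x ≤ f x) :
    Summable (fun x => |pi x - pin x| * g x) ∧
      ∑' x, |pi x - pin x| * g x ≤
        2 * E * (hatZ pin f v / hatZ pi f v) * ∑' x, pi x * g x := by
  have hf₀ : ∀ x, 0 < f x := fun x => zero_lt_one.trans_le (hf x)
  have hw : ∀ x, 0 < g x * (v x / f x) ∧ g x * (v x / f x) ≤ v x :=
    fun x => mul_div_pos_and_le (hg x) (hv x)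
  have hp := hpi.isProbVec_hatP hf₀ hv hC
  have hq := hpin.isProbVec_hatP hf₀ hv hC
  have hS := hpi.hatZ_pos hf₀ hv hC
  have hT := hpin.hatZ_pos hf₀ hv hC
  have hp_sum := summable_mul_of_pos_of_le hp.nonneg hw hpv
  have hd_sum := h.summable_abs_sub_mul hE hp.nonneg hp.summable hq.summable hpv hw
  have hD := h _ hw hp_sum
  have hST := hpi.abs_hatZ_sub_hatZ_le hpin hf hv hC hpv hE h
  refine (hpi.tsum_abs_sub_mul_le_add hpin hf₀ hv hC (fun x => (hg x).1.le) hp_sum hd_sum).imp_right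
    fun hle => hle.trans ?_
  rw [← hatZ_mul_tsum_hatP_mul (fun x => (hf₀ x).ne') (fun x => (hv x).ne') hS.ne' g]
  set S := hatZ pi f v
  set T := hatZ pin f v
  set W := ∑' x, hatP pi f v x * (g x * (v x / f x))
  have hW : 0 ≤ W := tsum_nonneg fun x => mul_nonneg (hp.nonneg x) (hw x).1.le
  calc T * (∑' x, |hatP pi f v x - hatP pin f v x| * (g x * (v x / f x))) + |S - T| * W
      ≤ T * (E * W) + E * T * W := by gcongr
    _ = 2 * E * (T / S) * (S * W) := by field_simp; ring

end ReweightedError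

theorem stmt12_general {F : Type*} {v f : F → ℝ} (hv : ∀ x, 0 < v x) (hf : ∀ x, 1 ≤ f x)
    {Cbar : ℝ} (hCbar : ∀ x, f x / v x ≤ Cbar) {pi pin : F → ℝ}
    (hpi : IsProbVec pi) (hpin : IsProbVec pin)
    {bhat : ℝ} (hhatv : Summable fun x => hatP pi f v x * v x)
    (hbhat : ∑' x, hatP pi f v x * v x ≤ bhat) {Ehat : ℝ} (hEhat : 0 ≤ Ehat)
    (hbound : RelErrorBound (hatP pi f v) (hatP pin f v) v Ehat)
    {g : F → ℝ} (hg : ∀ x, 0 < g x ∧ g x ≤ f x) :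
    Summable (fun x => |pi x - pin x| * g x) ∧
      ∑' x, |pi x - pin x| * g x ≤
        2 * Ehat / max (1 - min Ehat 1) (1 / (bhat * Cbar)) * ∑' x, pi x * g x := by
  have hf₀ : ∀ x, 0 < f x := fun x => zero_lt_one.trans_le (hf x)
  have hS := hpi.hatZ_pos hf₀ hv hCbar
  have hratio : hatZ pin f v / hatZ pi f v ≤
      (max (1 - min Ehat 1) (1 / (bhat * Cbar)))⁻¹ := by
    rw [div_le_iff₀' hS]
    exact le_div_max_of_abs_sub_le hS (hpin.hatZ_pos hf₀ hv hCbar) (hpin.hatZ_le hf₀ hv hCbar)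
      (hpi.one_le_mul_hatZ hf hv hCbar hhatv hbhat)
      (hpi.abs_hatZ_sub_hatZ_le hpin hf hv hCbar hhatv hEhat hbound)
  have hG : 0 ≤ ∑' x, pi x * g x := tsum_nonneg fun x => mul_nonneg (hpi.nonneg x) (hg x).1.le
  refine (hpi.tsum_abs_sub_mul_le hpin hf hv hCbar hhatv hEhat hbound hg).imp_right
    fun hle => hle.trans ?_
  rw [div_eq_mul_inv (2 * Ehat)]
  gcongr

/-- Relative-error bound (3.10) of the paper's Theorem 3.1, in per-function form. -/
theorem stmt12 {F : Type*} [Countable F] (v f : F → ℝ)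
    (hv : ∀ x, 0 < v x) (hf : ∀ x, 1 ≤ f x)
    (Cbar : ℝ) (hCbar : ∀ x, f x / v x ≤ Cbar)
    (pi pin : F → ℝ)
    (hpi0 : ∀ x, 0 ≤ pi x) (hpi1 : (∑' x, pi x) = 1)
    (hpin0 : ∀ x, 0 ≤ pin x) (hpin1 : (∑' x, pin x) = 1)
    (bhat : ℝ) (hbhat : 0 < bhat)
    (hhatv : Summable (fun x => hatP pi f v x * v x) ∧
      (∑' x, hatP pi f v x * v x) ≤ bhat)
    (Ehat : ℝ) (hEhat : 0 ≤ Ehat)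
    (hbound : ∀ g : F → ℝ, (∀ x, 0 < g x ∧ g x ≤ v x) →
      Summable (fun x => hatP pi f v x * g x) →
      (∑' x, |hatP pi f v x - hatP pin f v x| * g x) ≤
        Ehat * ∑' x, hatP pi f v x * g x) :
    ∀ g : F → ℝ, (∀ x, 0 < g x ∧ g x ≤ f x) →
      (∑' x, |pi x - pin x| * g x) ≤
        Ehat * (1 + (1 + Ehat) / max (1 - min Ehat 1) (1 / (bhat * Cbar))) *
          ∑' x, pi x * g x := by
  exact fun g hg => (stmt12_general hv hf hCbar ⟨hpi0, hpi1⟩ ⟨hpin0, hpin1⟩ hhatv.1 hhatv.2 hEhat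
    hbound hg).2.trans <| mul_le_mul_of_nonneg_right (two_mul_div_max_le hEhat _) <|
      tsum_nonneg fun x => mul_nonneg (hpi0 x) (hg x).1.le
end

section
/- Let F be a countable set, v : F → (0,∞), f : F → [1,∞), and suppose C̄ := sup_{x∈F} f(x)/v(x) < ∞. Let π and π* be probability vectors on F, and define π̂(x) := π(x)(f(x)/v(x)) / Σ_{z∈F} π(z)(f(z)/v(z)) and π̂*(x) := π*(x)(f(x)/v(x)) / Σ_{z∈F} π*(z)(f(z)/v(z)). If Σ_x π̂(x) v(x) ≤ b̂ for some b̂ > 0, then Σ_{x∈F} |π*(x) − π(x)| f(x) ≤ C̄ (1 + b̂ C̄) Σ_{x∈F} |π̂*(x) − π̂(x)| v(x), the inequality being understood in [0,∞]. -/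
/-!
Let `S` and `T` be the normalizing constants of `π̂` and `π̂*`, and put `u = π / S`, `w = π* / T`.
Then `π̂ v = u f` and `π̂* v = w f`, so `D = ∑ |π̂* - π̂| v` is the `f`-weighted distance from `u`
to `w`, which have total masses `1 / S` and `1 / T`. In
`π* - π = T w - S u = T ((w - u) + (1 / S - 1 / T) π)`
the scalar `1 / S - 1 / T` is the difference of these masses, so it is at most `D` because `f ≥ 1`.
Summing against `f` gives `∑ |π* - π| f ≤ T (1 + ∑ π f) D`, where `∑ π f = S ∑ π̂ v`.
-/

open scoped ENNReal

section Renormalization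

variable {ι : Type*}

lemma summable_of_tsum_ne_zero {M : Type*} [AddCommMonoid M] [TopologicalSpace M] {a : ι → M}
    (h : ∑' i, a i ≠ 0) : Summable a :=
  not_imp_comm.1 tsum_eq_zero_of_not_summable h

lemma enorm_sub_le_tsum_enorm_sub_mul {E : Type*} [NormedAddCommGroup E] {a b : ι → E}
    {A B : E} {f : ι → ℝ≥0∞} (ha : HasSum a A) (hb : HasSum b B) (hf : ∀ i, 1 ≤ f i) :
    ‖A - B‖ₑ ≤ ∑' i, ‖a i - b i‖ₑ * f i := by
  rw [← (ha.sub hb).tsum_eq]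
  exact enorm_tsum_le_tsum_enorm.trans
    (ENNReal.tsum_le_tsum fun i => le_mul_of_one_le_right' (hf i))

lemma tsum_enorm_mul_sub_mul_le {𝕜 : Type*} [NormedField 𝕜] {s t : 𝕜} {u w : ι → 𝕜}
    {f : ι → ℝ≥0∞} (hs : s ≠ 0) (ht : t ≠ 0) (hu : HasSum u s⁻¹) (hw : HasSum w t⁻¹)
    (hf : ∀ i, 1 ≤ f i) :
    ∑' i, ‖t * w i - s * u i‖ₑ * f i ≤
      ‖t‖ₑ * (1 + ∑' i, ‖s * u i‖ₑ * f i) * ∑' i, ‖w i - u i‖ₑ * f i := by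
  set D := ∑' i, ‖w i - u i‖ₑ * f i
  have hmass : ‖t⁻¹ - s⁻¹‖ₑ ≤ D := enorm_sub_le_tsum_enorm_sub_mul hw hu hf
  have hsplit (i : ι) : t * w i - s * u i = t * ((w i - u i) - (t⁻¹ - s⁻¹) * (s * u i)) := by
    field_simp
    ring
  calc ∑' i, ‖t * w i - s * u i‖ₑ * f i
      ≤ ∑' i, ‖t‖ₑ * (‖w i - u i‖ₑ * f i + ‖t⁻¹ - s⁻¹‖ₑ * (‖s * u i‖ₑ * f i)) := by
        refine ENNReal.tsum_le_tsum fun i => ?_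
        rw [hsplit, enorm_mul, mul_assoc, ← mul_assoc ‖t⁻¹ - s⁻¹‖ₑ, ← enorm_mul, ← add_mul]
        gcongr
        exact enorm_sub_le
    _ = ‖t‖ₑ * (D + ‖t⁻¹ - s⁻¹‖ₑ * ∑' i, ‖s * u i‖ₑ * f i) := by
        rw [ENNReal.tsum_mul_left, ENNReal.tsum_add, ENNReal.tsum_mul_left]
    _ ≤ ‖t‖ₑ * (D + D * ∑' i, ‖s * u i‖ₑ * f i) := by gcongr
    _ = ‖t‖ₑ * (1 + ∑' i, ‖s * u i‖ₑ * f i) * D := by ring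

end Renormalization

/-- The normalizing constant `∑ p f / v` of the transformed vector `hatP p f v`. It takes the junk
value `0` if the series diverges. -/
noncomputable def hatMass {F : Type*} (p f v : F → ℝ) : ℝ :=
  ∑' z, p z * (f z / v z)

section HatP

variable {F : Type*} {p q f v : F → ℝ}

lemma hatP_mul_weight {x : F} (hv : v x ≠ 0) :
    hatP p f v x * v x = p x / hatMass p f v * f x := by
  rw [hatP, ← hatMass]
  field_simp

lemma ofReal_abs_hatP_sub_hatP_mul {x : F} (hv : 0 < v x) (hf : 0 ≤ f x) :
    ENNReal.ofReal (|hatP q f v x - hatP p f v x| * v x) =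
      ‖q x / hatMass q f v - p x / hatMass p f v‖ₑ * ENNReal.ofReal (f x) := by
  have hdiff : (hatP q f v x - hatP p f v x) * v x =
      (q x / hatMass q f v - p x / hatMass p f v) * f x := by
    simp only [sub_mul, hatP_mul_weight hv.ne']
  have habs : |hatP q f v x - hatP p f v x| * v x =
      |q x / hatMass q f v - p x / hatMass p f v| * f x := by
    simpa only [abs_mul, abs_of_pos hv, abs_of_nonneg hf] using congrArg abs hdiff
  rw [habs, ENNReal.ofReal_mul (abs_nonneg _), Real.enorm_eq_ofReal_abs]

lemma hatMass_mem_Ioc {C : ℝ} (hv : ∀ x, 0 < v x) (hf : ∀ x, 0 < f x) (hC : ∀ x, f x / v x ≤ C)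
    (hp0 : ∀ x, 0 ≤ p x) (hp1 : ∑' x, p x = 1) : hatMass p f v ∈ Set.Ioc 0 C := by
  have hr (x : F) : 0 < f x / v x := div_pos (hf x) (hv x)
  have hp : Summable p := summable_of_tsum_ne_zero (hp1.trans_ne one_ne_zero)
  have hle (x : F) : p x * (f x / v x) ≤ p x * C := mul_le_mul_of_nonneg_left (hC x) (hp0 x)
  have h0 (x : F) : 0 ≤ p x * (f x / v x) := mul_nonneg (hp0 x) (hr x).le
  have hs : Summable fun x => p x * (f x / v x) := .of_nonneg_of_le h0 hle (hp.mul_right C)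
  obtain ⟨x, hx⟩ : ∃ x, p x ≠ 0 := by
    by_contra! hzero
    simp [hzero] at hp1
  refine ⟨hs.tsum_pos h0 x (mul_pos ((hp0 x).lt_of_ne' hx) (hr x)), ?_⟩
  calc hatMass p f v ≤ ∑' x, p x * C := hs.tsum_le_tsum hle (hp.mul_right C)
    _ = C := by rw [tsum_mul_right, hp1, one_mul]

lemma tsum_ofReal_abs_mul_eq (hv : ∀ x, v x ≠ 0) (hf : ∀ x, 0 ≤ f x) (hp0 : ∀ x, 0 ≤ p x)
    (hp : hatMass p f v ≠ 0) (hs : Summable fun x => hatP p f v x * v x) :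
    ∑' x, ENNReal.ofReal (|p x| * f x) =
      ENNReal.ofReal (hatMass p f v * ∑' x, hatP p f v x * v x) := by
  have hpf (x : F) : |p x| * f x = hatMass p f v * (hatP p f v x * v x) := by
    rw [abs_of_nonneg (hp0 x), hatP_mul_weight (hv x), ← mul_assoc, mul_div_cancel₀ _ hp]
  have h0 (x : F) : 0 ≤ hatMass p f v * (hatP p f v x * v x) :=
    hpf x ▸ mul_nonneg (abs_nonneg _) (hf x)
  simp only [hpf]
  rw [← ENNReal.ofReal_tsum_of_nonneg h0 (hs.mul_left _), tsum_mul_left]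

lemma ofReal_abs_hatMass_mul_one_add_tsum_le {b C : ℝ} (hv : ∀ x, v x ≠ 0) (hf : ∀ x, 0 ≤ f x)
    (hp0 : ∀ x, 0 ≤ p x) (hp : hatMass p f v ∈ Set.Ioc 0 C) (hq : hatMass q f v ∈ Set.Ioc 0 C)
    (hb0 : 0 ≤ b) (hs : Summable fun x => hatP p f v x * v x)
    (hb : ∑' x, hatP p f v x * v x ≤ b) :
    ENNReal.ofReal |hatMass q f v| * (1 + ∑' x, ENNReal.ofReal (|p x| * f x)) ≤
      ENNReal.ofReal (C * (1 + b * C)) := by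
  have hC : 0 ≤ C := hp.1.le.trans hp.2
  have hmoment : hatMass p f v * ∑' x, hatP p f v x * v x ≤ b * C := by
    rw [mul_comm]
    exact mul_le_mul hb hp.2 hp.1.le hb0
  rw [tsum_ofReal_abs_mul_eq hv hf hp0 hp.1.ne' hs, abs_of_pos hq.1, ENNReal.ofReal_mul hC,
    ENNReal.ofReal_add zero_le_one (mul_nonneg hb0 hC), ENNReal.ofReal_one]
  gcongr
  exact hq.2

end HatP

theorem stmt18_general {F : Type*} (v f : F → ℝ) (hv : ∀ x, 0 < v x) (hf : ∀ x, 1 ≤ f x)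
    (p q : F → ℝ) (hp1 : ∑' x, p x = 1) (hq1 : ∑' x, q x = 1)
    (hp : hatMass p f v ≠ 0) (hq : hatMass q f v ≠ 0) :
    ∑' x, ENNReal.ofReal (|q x - p x| * f x) ≤
      ENNReal.ofReal |hatMass q f v| * (1 + ∑' x, ENNReal.ofReal (|p x| * f x)) *
        ∑' x, ENNReal.ofReal (|hatP q f v x - hatP p f v x| * v x) := by
  have hasSum_div {r : F → ℝ} (hr1 : ∑' x, r x = 1) (s : ℝ) : HasSum (fun x => r x / s) s⁻¹ := by
    have hr : Summable r := summable_of_tsum_ne_zero (hr1.trans_ne one_ne_zero)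
    simpa only [hr1, one_div] using hr.hasSum.div_const s
  have hdist (x : F) := ofReal_abs_hatP_sub_hatP_mul (p := p) (q := q) (hv x)
    (zero_le_one.trans (hf x))
  simp only [hdist, ENNReal.ofReal_mul (abs_nonneg _), ← Real.enorm_eq_ofReal_abs]
  simpa only [mul_div_cancel₀ _ hp, mul_div_cancel₀ _ hq] using
    tsum_enorm_mul_sub_mul_le hp hq (hasSum_div hp1 _) (hasSum_div hq1 _)
      fun x => ENNReal.one_le_ofReal.2 (hf x)

/-- The key inequality `‖π* − π‖_f ≤ C̄ (1 + b̂ C̄) ‖π̂* − π̂‖_v` from the proof of the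
paper's Theorem 5.2, understood in `[0,∞]`. -/
theorem stmt18 {F : Type*} [Countable F] (v f : F → ℝ)
    (hv : ∀ x, 0 < v x) (hf : ∀ x, 1 ≤ f x)
    (Cbar : ℝ) (hCbar : ∀ x, f x / v x ≤ Cbar)
    (pi pis : F → ℝ)
    (hpi0 : ∀ x, 0 ≤ pi x) (hpi1 : (∑' x, pi x) = 1)
    (hpis0 : ∀ x, 0 ≤ pis x) (hpis1 : (∑' x, pis x) = 1)
    (bhat : ℝ) (hbhat : 0 < bhat)
    (hhatv : Summable (fun x => hatP pi f v x * v x) ∧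
      (∑' x, hatP pi f v x * v x) ≤ bhat) :
    (∑' x, ENNReal.ofReal (|pis x - pi x| * f x)) ≤
      ENNReal.ofReal (Cbar * (1 + bhat * Cbar)) *
        ∑' x, ENNReal.ofReal (|hatP pis f v x - hatP pi f v x| * v x) := by
  have hf0 (x : F) : 0 < f x := one_pos.trans_le (hf x)
  have hS := hatMass_mem_Ioc hv hf0 hCbar hpi0 hpi1
  have hT := hatMass_mem_Ioc hv hf0 hCbar hpis0 hpis1
  exact (stmt18_general v f hv hf pi pis hpi1 hpis1 hS.1.ne' hT.1.ne').trans <|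
    mul_le_mul_left (ofReal_abs_hatMass_mul_one_add_tsum_le (fun x => (hv x).ne')
      (fun x => (hf0 x).le) hpi0 hS hT hbhat.le hhatv.1 hhatv.2) _
end
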